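/- (Feltrin–Zanolin multiplicity theorem.) Let g : [0,∞) → [0,∞) be continuous and satisfy (g₊), (g₀) and (g_∞), and let h ∈ L¹([a,b]) satisfy condition (h*) with m positivity intervals. Then there exists μ* > 0 such that for every μ > μ* the Dirichlet problem (D_μ): u'' + (h⁺(t) − μ h⁻(t)) g(u) = 0, u(a) = 0 = u(b), has at least 2^m − 1 positive solutions. -/

import Mathlib

open Set MeasureTheory Filter Topology

/-- Carathéodory solution of `u'' + F(t, u) = 0` on `[a,b]`. -/
def IsCaraSol (a b : ℝ) (F : ℝ → ℝ → ℝ) (u u' : ℝ → ℝ) : Prop :=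
  (∀ t ∈ Set.Icc a b, HasDerivAt u (u' t) t) ∧
  IntervalIntegrable (fun s => F s (u s)) MeasureTheory.volume a b ∧
  ∀ t ∈ Set.Icc a b, u' t = u' a - ∫ s in a..t, F s (u s)

/-- The positive part `h⁺ = |h|/2 + h/2` of a weight function. -/
noncomputable def posW (h : ℝ → ℝ) : ℝ → ℝ := fun t => |h t| / 2 + h t / 2

/-- The negative part `h⁻ = |h|/2 - h/2` of a weight function. -/
noncomputable def negW (h : ℝ → ℝ) : ℝ → ℝ := fun t => |h t| / 2 - h t / 2

/-!
Extend the weight by zero and shoot from `u(a) = 0`, `u'(a) = s`. The shooting problem is made well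
posed by replacing `g` with its `K`-Lipschitz minorants, to which all the estimates apply
uniformly in `K`.

By superlinearity at infinity, a nonnegative solution stays below some height `M` on each interval
of positivity (a *bump*), so a solution exceeding `M` there is negative at the end of the bump,
and it stays negative. By sublinearity at zero, a solution whose peak on a bump lies in `[r/2, r]`
stays above `r/4` through the next interval of negativity, whose mass, for large `μ`, throws it
above `M` by the start of the next bump.

Hence, if along a segment of slopes `s` the solutions pass from exceeding `M` on a bump to
vanishing at its start, then some slope gives a peak exactly `r` on that bump, and on either side
of it the peaks can be kept at least `r` or at most `r` while the solutions pass from exceeding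
`M` to vanishing at the next bump. Iterating, any subset of the bumps can be prescribed as the set
of bumps where the peak is at least `r`, and the last zero can be placed at `b`. The condition
`u(b) = 0` then forces all other peaks below `r/2`. The gap between `r/2` and `r` survives the
limit `K → ∞`, so the `2^m - 1` nonempty subsets produce distinct solutions. They are positive
because an interior zero would be a double zero, and `g = O(id)` at zero.
-/

section Calculus

theorem mul_sub_le_image_sub_of_hasDerivAt {u p : ℝ → ℝ} {x y c : ℝ}
    (hu : ∀ t, HasDerivAt u (p t) t) (hxy : x ≤ y) (hc : ∀ t ∈ Icc x y, c ≤ p t) :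
    c * (y - x) ≤ u y - u x := by
  refine (convex_Icc x y).mul_sub_le_image_sub_of_le_deriv
    (fun t _ ↦ (hu t).continuousAt.continuousWithinAt)
    (fun t _ ↦ (hu t).differentiableAt.differentiableWithinAt) (fun t ht ↦ ?_)
    x (left_mem_Icc.2 hxy) y (right_mem_Icc.2 hxy) hxy
  rw [(hu t).deriv]
  exact hc t (interior_subset ht)

theorem image_sub_le_mul_sub_of_hasDerivAt {u p : ℝ → ℝ} {x y c : ℝ}
    (hu : ∀ t, HasDerivAt u (p t) t) (hxy : x ≤ y) (hc : ∀ t ∈ Icc x y, p t ≤ c) :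
    u y - u x ≤ c * (y - x) := by
  have := mul_sub_le_image_sub_of_hasDerivAt (fun t ↦ (hu t).neg) hxy
    fun t ht ↦ neg_le_neg (hc t ht)
  simp only [Pi.neg_apply] at this
  linarith

theorem hasDerivAt_mul_sub_nonneg_of_forall_uIcc_le {u : ℝ → ℝ} {u' t x : ℝ}
    (hu : HasDerivAt u u' t) (hmin : ∀ y ∈ uIcc t x, u t ≤ u y) : 0 ≤ (x - t) * u' := by
  have hloc : IsLocalMinOn u (uIcc t x) t :=
    eventually_nhdsWithin_of_forall hmin
  simpa using hloc.hasFDerivWithinAt_nonneg hu.hasFDerivAt.hasFDerivWithinAt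
    (sub_mem_posTangentConeAt_of_segment_subset (segment_eq_uIcc t x).subset)

theorem exists_eq_and_forall_uIcc_le {f : ℝ → ℝ} {x y v : ℝ} (hf : Continuous f)
    (hx : v ≤ f x) (hy : f y ≤ v) :
    ∃ z ∈ uIcc x y, f z = v ∧ ∀ w ∈ uIcc x z, v ≤ f w := by
  have hcross : ∀ w, f w ≤ v → ∃ z ∈ uIcc x w, f z = v := fun w hw ↦
    intermediate_value_uIcc hf.continuousOn
      ⟨(min_le_right _ _).trans hw, hx.trans (le_max_left _ _)⟩
  have hcompact : IsCompact (uIcc x y ∩ f ⁻¹' {v}) :=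
    isCompact_uIcc.inter_right (isClosed_singleton.preimage hf)
  obtain ⟨z, ⟨hz, hfz⟩, hmin⟩ := hcompact.exists_isMinOn (f := fun w ↦ |w - x|) (hcross y hy)
    (by fun_prop)
  refine ⟨z, hz, hfz, fun w hw ↦ ?_⟩
  by_contra! hlt
  obtain ⟨w', hw', hfw'⟩ := hcross w hlt.le
  have hle : |z - x| ≤ |w' - x| :=
    hmin ⟨uIcc_subset_uIcc_left (uIcc_subset_uIcc_left hz hw) hw', hfw'⟩
  have hzw : |z - x| ≤ |w - x| := hle.trans (abs_sub_left_of_mem_uIcc hw')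
  have : w = z := by
    rcases le_total x z with h | h
    · rw [uIcc_of_le h] at hw
      rw [abs_of_nonneg (sub_nonneg.2 h), abs_of_nonneg (sub_nonneg.2 hw.1)] at hzw
      linarith [hw.2]
    · rw [uIcc_of_ge h] at hw
      rw [abs_of_nonpos (sub_nonpos.2 h), abs_of_nonpos (sub_nonpos.2 hw.2)] at hzw
      linarith [hw.1]
  exact (this ▸ hlt).ne hfz

theorem exists_eq_and_endpoint {f : ℝ → ℝ} {x y v : ℝ} (hf : Continuous f)
    (hx : v ≤ f x) (hy : f y ≤ v) (above : Prop) :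
    ∃ q ∈ uIcc x y, ∃ e ∈ ({x, y} : Set ℝ), f q = v ∧
      ∀ w ∈ uIcc q e, (above → v ≤ f w) ∧ (¬above → f w ≤ v) := by
  by_cases h : above
  · obtain ⟨q, hq, hfq, hle⟩ := exists_eq_and_forall_uIcc_le hf hx hy
    exact ⟨q, hq, x, by simp, hfq, fun w hw ↦
      ⟨fun _ ↦ hle w (uIcc_comm q x ▸ hw), fun h' ↦ absurd h h'⟩⟩
  · obtain ⟨q, hq, hfq, hle⟩ :=
      exists_eq_and_forall_uIcc_le hf.neg (neg_le_neg hy) (neg_le_neg hx)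
    exact ⟨q, uIcc_comm y x ▸ hq, y, by simp, neg_inj.1 hfq, fun w hw ↦
      ⟨fun h' ↦ absurd h' h, fun _ ↦ neg_le_neg_iff.1 (hle w (uIcc_comm q y ▸ hw))⟩⟩

theorem abs_sub_mul_le_of_concaveOn {s : Set ℝ} {u : ℝ → ℝ} {z w t : ℝ}
    (hu : ConcaveOn ℝ s u) (hz : z ∈ s) (hw : w ∈ s) (hw0 : 0 ≤ u w) (ht : t ∈ uIcc z w) :
    |w - t| * u z ≤ |w - z| * u t := by
  rw [← segment_eq_uIcc] at ht
  obtain ⟨α, β, hα, hβ, hαβ, rfl⟩ := ht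
  have hconc := hu.2 hz hw hα hβ hαβ
  simp only [smul_eq_mul] at hconc ⊢
  have hdist : w - (α * z + β * w) = α * (w - z) := by
    rw [← eq_sub_iff_add_eq'] at hαβ
    rw [hαβ]
    ring
  calc |w - (α * z + β * w)| * u z = |w - z| * (α * u z) := by
        rw [hdist, abs_mul, abs_of_nonneg hα]
        ring
    _ ≤ |w - z| * u (α * z + β * w) := by
        gcongr
        linarith [mul_nonneg hβ hw0]

theorem mul_le_mul_of_concaveOn_Icc {u : ℝ → ℝ} {x y d z t : ℝ} (hu : ConcaveOn ℝ (Icc x y) u)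
    (hnonneg : ∀ t ∈ Icc x y, 0 ≤ u t) (hd : 0 ≤ d) (hz : z ∈ Icc x y)
    (ht : t ∈ Icc (x + d) (y - d)) : d * u z ≤ (y - x) * u t := by
  have htxy : t ∈ Icc x y := ⟨by linarith [ht.1], by linarith [ht.2]⟩
  have hxy : x ≤ y := hz.1.trans hz.2
  suffices ∃ w ∈ Icc x y, t ∈ uIcc z w ∧ d ≤ |w - t| by
    obtain ⟨w, hw, htw, hdw⟩ := this
    calc d * u z ≤ |w - t| * u z := by gcongr; exact hnonneg z hz
      _ ≤ |w - z| * u t := abs_sub_mul_le_of_concaveOn hu hz hw (hnonneg w hw) htw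
      _ ≤ (y - x) * u t := by
        gcongr
        · exact hnonneg t htxy
        · exact abs_sub_le_of_le_of_le hw.1 hw.2 hz.1 hz.2
  rcases le_total z t with hzt | htz
  · exact ⟨y, right_mem_Icc.2 hxy, mem_uIcc.2 (Or.inl ⟨hzt, htxy.2⟩),
      le_abs.2 (Or.inl (by linarith [ht.2]))⟩
  · exact ⟨x, left_mem_Icc.2 hxy, mem_uIcc.2 (Or.inr ⟨htxy.1, htz⟩),
      le_abs.2 (Or.inr (by linarith [ht.1]))⟩

theorem intervalIntegrable_mul_comp {W f v : ℝ → ℝ} (hW : Integrable W) (hf : Continuous f)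
    (hv : Continuous v) (x y : ℝ) : IntervalIntegrable (fun t ↦ W t * f (v t)) volume x y :=
  hW.intervalIntegrable.mul_continuousOn (hf.comp hv).continuousOn

theorem abs_intervalIntegral_mul_le {W v : ℝ → ℝ} {x y c : ℝ} (hW : Integrable W) (hc : 0 ≤ c)
    (hv : ∀ t ∈ uIcc x y, |v t| ≤ c) : |∫ t in x..y, W t * v t| ≤ c * ∫ t, |W t| := by
  have hint : Integrable fun t ↦ c * |W t| := hW.abs.const_mul c
  calc |∫ t in x..y, W t * v t| = ‖∫ t in uIoc x y, W t * v t‖ := by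
        rw [← Real.norm_eq_abs, intervalIntegral.norm_intervalIntegral_eq]
    _ ≤ ∫ t in uIoc x y, c * |W t| := by
        refine norm_integral_le_of_norm_le hint.integrableOn ?_
        filter_upwards [ae_restrict_mem measurableSet_uIoc] with t ht
        rw [Real.norm_eq_abs, abs_mul, mul_comm]
        gcongr
        exact hv t (uIoc_subset_uIcc ht)
    _ ≤ ∫ t, c * |W t| :=
        setIntegral_le_integral hint (Eventually.of_forall fun t ↦ by positivity)
    _ = c * ∫ t, |W t| := integral_const_mul _ _

theorem intervalIntegral_congr_of_ae_restrict_Icc {f g : ℝ → ℝ} {l r x y : ℝ}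
    (hfg : f =ᵐ[volume.restrict (Icc l r)] g) (hlx : l ≤ x) (hxy : x ≤ y) (hyr : y ≤ r) :
    ∫ t in x..y, f t = ∫ t in x..y, g t := by
  refine intervalIntegral.integral_congr_ae_restrict (ae_restrict_of_ae_restrict_of_subset ?_ hfg)
  rw [uIoc_of_le hxy]
  exact Ioc_subset_Icc_self.trans (Icc_subset_Icc hlx hyr)

theorem intervalIntegral_abs_pos {h : ℝ → ℝ} {x y : ℝ} (hxy : x ≤ y)
    (hh : IntegrableOn h (Icc x y))
    (hne : ¬ ∀ᵐ t ∂volume.restrict (Icc x y), h t = 0) : 0 < ∫ t in x..y, |h t| := by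
  rw [intervalIntegral.integral_of_le hxy, ← integral_Icc_eq_integral_Ioc]
  refine (integral_nonneg fun t ↦ abs_nonneg (h t)).lt_of_ne fun hzero ↦ hne ?_
  filter_upwards [(integral_eq_zero_iff_of_nonneg (fun t ↦ abs_nonneg (h t)) hh.abs).1 hzero.symm]
    with t ht
  exact abs_eq_zero.1 ht

theorem continuous_intervalIntegral_of_integrable {f l r : ℝ → ℝ} (hf : Integrable f)
    (hl : Continuous l) (hr : Continuous r) : Continuous fun s ↦ ∫ t in (l s)..(r s), f t := by
  have hprim : Continuous fun x ↦ ∫ t in (0 : ℝ)..x, f t :=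
    intervalIntegral.continuous_primitive (fun _ _ ↦ hf.intervalIntegrable) 0
  refine ((hprim.comp hr).sub (hprim.comp hl)).congr fun s ↦ ?_
  exact intervalIntegral.integral_interval_sub_left hf.intervalIntegrable hf.intervalIntegrable

theorem eventually_le_intervalIntegral_shrink {f : ℝ → ℝ} {x y k : ℝ} (hxy : x < y) (hk : 0 ≤ k)
    (hf : IntegrableOn f (Icc x y)) (hpos : 0 < ∫ t in x..y, f t) :
    ∀ᶠ δ in 𝓝[>] (0 : ℝ),
      (k + 1) * δ ≤ y - x ∧ δ ≤ ∫ t in (x + k * δ)..(y - δ), f t := by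
  set f₀ := (Icc x y).indicator f
  have hf₀_eq : f₀ =ᵐ[volume.restrict (Icc x y)] f := indicator_ae_eq_restrict measurableSet_Icc
  have hmass : Continuous fun δ ↦ ∫ t in (x + k * δ)..(y - δ), f₀ t :=
    continuous_intervalIntegral_of_integrable
      ((integrable_indicator_iff measurableSet_Icc).2 hf) (by fun_prop) (by fun_prop)
  have hmass₀ : (0 : ℝ) < ∫ t in (x + k * 0)..(y - 0), f₀ t := by
    simpa [intervalIntegral_congr_of_ae_restrict_Icc hf₀_eq le_rfl hxy.le le_rfl] using hpos
  have hlen : Continuous fun δ : ℝ ↦ (k + 1) * δ := by fun_prop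
  have hlen₀ : (k + 1) * 0 < y - x := by simpa using hxy
  filter_upwards [nhdsWithin_le_nhds
      (continuous_id.continuousAt.eventually_lt hmass.continuousAt hmass₀),
    nhdsWithin_le_nhds (hlen.continuousAt.eventually_lt continuousAt_const hlen₀),
    self_mem_nhdsWithin] with δ hδmass hδlen hδ
  have hkδ : 0 ≤ k * δ := mul_nonneg hk (mem_Ioi.1 hδ).le
  refine ⟨hδlen.le, hδmass.le.trans_eq ?_⟩
  exact intervalIntegral_congr_of_ae_restrict_Icc hf₀_eq (by linarith) (by linarith)
    (by linarith [mem_Ioi.1 hδ])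

end Calculus

/-- The maximum of `u` over `[x, y]`. -/
noncomputable def peak (u : ℝ → ℝ) (x y : ℝ) : ℝ := sSup (u '' Icc x y)

section Peak

theorem le_peak {u : ℝ → ℝ} {x y t : ℝ} (hu : Continuous u) (ht : t ∈ Icc x y) :
    u t ≤ peak u x y :=
  le_csSup (isCompact_Icc.image hu).bddAbove (mem_image_of_mem u ht)

theorem exists_eq_peak {u : ℝ → ℝ} {x y : ℝ} (hu : Continuous u) (hxy : x ≤ y) :
    ∃ t ∈ Icc x y, u t = peak u x y :=
  (isCompact_Icc.image hu).sSup_mem ((nonempty_Icc.2 hxy).image u)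

theorem peak_le_peak_add {u v : ℝ → ℝ} {x y c : ℝ} (hu : Continuous u) (hv : Continuous v)
    (hxy : x ≤ y) (h : ∀ t ∈ Icc x y, |u t - v t| ≤ c) : peak u x y ≤ peak v x y + c := by
  obtain ⟨t, ht, hut⟩ := exists_eq_peak hu hxy
  linarith [le_peak hv ht, (abs_le.1 (h t ht)).2]

theorem abs_peak_sub_peak_le {u v : ℝ → ℝ} {x y c : ℝ} (hu : Continuous u) (hv : Continuous v)
    (hxy : x ≤ y) (h : ∀ t ∈ Icc x y, |u t - v t| ≤ c) : |peak u x y - peak v x y| ≤ c :=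
  abs_sub_le_iff.2 ⟨by linarith [peak_le_peak_add hu hv hxy h],
    by linarith [peak_le_peak_add hv hu hxy fun t ht ↦ abs_sub_comm (u t) (v t) ▸ h t ht]⟩

end Peak

/-! ### The shooting flow -/

/-- `u` solves `u'' + W f(u) = 0` on the line in the Carathéodory sense, with slope `p = u'`. -/
structure IsSolution (W f u p : ℝ → ℝ) : Prop where
  hasDerivAt : ∀ t, HasDerivAt u (p t) t
  slope_sub : ∀ x y, p y - p x = -∫ t in x..y, W t * f (u t)

/-- The slope produced by one Picard iteration from `v`, with initial slope `s` at `a`. -/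
noncomputable def picardSlope (W f : ℝ → ℝ) (a s : ℝ) (v : ℝ → ℝ) (t : ℝ) : ℝ :=
  s - ∫ x in a..t, W x * f (v x)

/-- The Picard iterate of `v` for `u'' + W f(u) = 0`, `u(a) = 0`, `u'(a) = s`. -/
noncomputable def picardStep (W f : ℝ → ℝ) (a s : ℝ) (v : ℝ → ℝ) (t : ℝ) : ℝ :=
  ∫ x in a..t, picardSlope W f a s v x

section Picard

variable {W f v v' : ℝ → ℝ} {a : ℝ}

theorem continuous_picardSlope (hW : Integrable W) (hf : Continuous f) (hv : Continuous v)
    (s : ℝ) : Continuous (picardSlope W f a s v) :=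
  continuous_const.sub <| intervalIntegral.continuous_primitive
    (intervalIntegrable_mul_comp hW hf hv) a

theorem hasDerivAt_picardStep (hW : Integrable W) (hf : Continuous f) (hv : Continuous v)
    (s t : ℝ) : HasDerivAt (picardStep W f a s v) (picardSlope W f a s v t) t :=
  (continuous_picardSlope hW hf hv s).integral_hasStrictDerivAt a t |>.hasDerivAt

theorem continuous_picardStep (hW : Integrable W) (hf : Continuous f) (hv : Continuous v)
    (s : ℝ) : Continuous (picardStep W f a s v) :=
  continuous_iff_continuousAt.2 fun t ↦ (hasDerivAt_picardStep hW hf hv s t).continuousAt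

theorem picardStep_sub_picardStep_slope (hW : Integrable W) (hf : Continuous f)
    (hv : Continuous v) (s s' t : ℝ) :
    picardStep W f a s v t - picardStep W f a s' v t = (t - a) * (s - s') := by
  unfold picardStep
  rw [← intervalIntegral.integral_sub
    ((continuous_picardSlope hW hf hv s).intervalIntegrable _ _)
    ((continuous_picardSlope hW hf hv s').intervalIntegrable _ _)]
  simp [picardSlope, mul_sub]

theorem isSolution_of_eqOn_picardStep (hW : Integrable W) (hf : Continuous f)
    (hv : Continuous v) {s : ℝ} {S : Set ℝ} (hWS : ∀ t ∉ S, W t = 0)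
    (hfix : EqOn (picardStep W f a s v) v S) :
    IsSolution W f (picardStep W f a s v) (picardSlope W f a s v) where
  hasDerivAt := hasDerivAt_picardStep hW hf hv s
  slope_sub x y := by
    have hcongr : (fun t ↦ W t * f (picardStep W f a s v t)) = fun t ↦ W t * f (v t) := by
      ext t
      by_cases ht : t ∈ S
      · rw [hfix ht]
      · simp [hWS t ht]
    have hint := intervalIntegrable_mul_comp hW hf hv
    rw [hcongr, ← intervalIntegral.integral_interval_sub_left (hint a y) (hint a x)]
    simp only [picardSlope]
    ring

theorem abs_picardSlope_sub_le {K : NNReal} (hW : Integrable W) (hf : LipschitzWith K f)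
    (hv : Continuous v) (hv' : Continuous v') {l d t : ℝ} (hl : 0 ≤ l) (hd : 0 ≤ d) (s : ℝ)
    (hat : a ≤ t) (hvv' : ∀ x ∈ Icc a t, |v x - v' x| ≤ d * Real.exp (l * x)) :
    |picardSlope W f a s v t - picardSlope W f a s v' t| ≤
      K * d * Real.exp (l * t) * ∫ x, |W x| := by
  have hsub : picardSlope W f a s v t - picardSlope W f a s v' t =
      -∫ x in a..t, W x * (f (v x) - f (v' x)) := by
    simp only [mul_sub]
    rw [intervalIntegral.integral_sub
      (intervalIntegrable_mul_comp hW hf.continuous hv _ _)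
      (intervalIntegrable_mul_comp hW hf.continuous hv' _ _)]
    simp only [picardSlope]
    ring
  rw [hsub, abs_neg]
  refine abs_intervalIntegral_mul_le hW (by positivity) fun x hx ↦ ?_
  rw [uIcc_of_le hat] at hx
  calc |f (v x) - f (v' x)| ≤ K * |v x - v' x| := hf.dist_le_mul (v x) (v' x)
    _ ≤ K * (d * Real.exp (l * t)) := by
      gcongr
      refine (hvv' x hx).trans ?_
      gcongr
      exact hx.2
    _ = K * d * Real.exp (l * t) := by ring

theorem abs_picardStep_sub_le {K : NNReal} (hW : Integrable W) (hf : LipschitzWith K f)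
    (hv : Continuous v) (hv' : Continuous v') {l d t : ℝ} (hl : 0 < l) (hd : 0 ≤ d) (s : ℝ)
    (hKl : 2 * (K * ∫ x, |W x|) ≤ l)
    (hat : a ≤ t) (hvv' : ∀ x ∈ Icc a t, |v x - v' x| ≤ d * Real.exp (l * x)) :
    |picardStep W f a s v t - picardStep W f a s v' t| ≤ 1 / 2 * d * Real.exp (l * t) := by
  have hslope : ∀ x ∈ Ioc a t, ‖picardSlope W f a s v x - picardSlope W f a s v' x‖ ≤
      d / 2 * (l * Real.exp (l * x)) := fun x hx ↦
    calc |picardSlope W f a s v x - picardSlope W f a s v' x| ≤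
          K * d * Real.exp (l * x) * ∫ x, |W x| :=
          abs_picardSlope_sub_le hW hf hv hv' hl.le hd s hx.1.le
            fun y hy ↦ hvv' y ⟨hy.1, hy.2.trans hx.2⟩
      _ = d / 2 * (2 * (K * ∫ x, |W x|) * Real.exp (l * x)) := by ring
      _ ≤ d / 2 * (l * Real.exp (l * x)) := by gcongr
  have hexp : ∀ x ∈ uIcc a t, HasDerivAt (fun x ↦ d / 2 * Real.exp (l * x))
      (d / 2 * (l * Real.exp (l * x))) x := fun x _ ↦ by
    simpa [mul_comm] using (((hasDerivAt_id x).const_mul l).exp.const_mul (d / 2))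
  have hexp_int : IntervalIntegrable (fun x ↦ d / 2 * (l * Real.exp (l * x))) volume a t :=
    Continuous.intervalIntegrable (by fun_prop) _ _
  rw [picardStep, picardStep, ← intervalIntegral.integral_sub
    ((continuous_picardSlope hW hf.continuous hv s).intervalIntegrable _ _)
    ((continuous_picardSlope hW hf.continuous hv' s).intervalIntegrable _ _)]
  calc ‖∫ x in a..t, (picardSlope W f a s v x - picardSlope W f a s v' x)‖
      ≤ ∫ x in a..t, d / 2 * (l * Real.exp (l * x)) :=
        intervalIntegral.norm_integral_le_of_norm_le hat (Eventually.of_forall hslope) hexp_int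
    _ = d / 2 * Real.exp (l * t) - d / 2 * Real.exp (l * a) :=
        intervalIntegral.integral_eq_sub_of_hasDerivAt hexp hexp_int
    _ ≤ 1 / 2 * d * Real.exp (l * t) := by
        linarith [mul_nonneg (half_pos zero_lt_two).le
          (mul_nonneg hd (Real.exp_pos (l * a)).le)]

end Picard

/-- The function on the line represented by `w`, where `C(Icc a b, ℝ)` is given the weighted
(Bielecki) norm `sup |u(t)| e^{-lt}`: it equals `e^{lt} w(t)` on `[a, b]`. -/
noncomputable def bieleckiExtend {a b : ℝ} (hab : a ≤ b) (l : ℝ) (w : C(Icc a b, ℝ)) (t : ℝ) : ℝ :=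
  Real.exp (l * t) * IccExtend hab w t

theorem continuous_bieleckiExtend {a b : ℝ} (hab : a ≤ b) (l : ℝ)
    (w : C(Icc a b, ℝ)) :
    Continuous (bieleckiExtend hab l w) := by
  have := w.continuous.Icc_extend' (h := hab)
  unfold bieleckiExtend
  fun_prop

/-- The Picard iteration read through `bieleckiExtend`; large `l` makes it a contraction. -/
noncomputable def bieleckiPicard {a b : ℝ} (hab : a ≤ b) {W f : ℝ → ℝ} (hW : Integrable W)
    (hf : Continuous f) (l s : ℝ) (w : C(Icc a b, ℝ)) : C(Icc a b, ℝ) where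
  toFun t := Real.exp (-(l * t)) * picardStep W f a s (bieleckiExtend hab l w) t
  continuous_toFun := by
    have := continuous_picardStep (a := a) hW hf (continuous_bieleckiExtend hab l w) s
    fun_prop

section Flow

variable {a b : ℝ} (hab : a ≤ b)

theorem abs_bieleckiExtend_sub_le (l : ℝ) (w w' : C(Icc a b, ℝ)) (t : ℝ) :
    |bieleckiExtend hab l w t - bieleckiExtend hab l w' t| ≤ dist w w' * Real.exp (l * t) := by
  rw [bieleckiExtend, bieleckiExtend, ← mul_sub, abs_mul, Real.abs_exp, mul_comm]
  gcongr
  exact ContinuousMap.dist_apply_le_dist (f := w) (g := w') (projIcc a b hab t)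

theorem dist_bieleckiPicard_le {W f : ℝ → ℝ} (hW : Integrable W) (hf : Continuous f)
    {l s s' D : ℝ} (hD : 0 ≤ D) {w w' : C(Icc a b, ℝ)}
    (h : ∀ t ∈ Icc a b, |picardStep W f a s (bieleckiExtend hab l w) t -
      picardStep W f a s' (bieleckiExtend hab l w') t| ≤ D * Real.exp (l * t)) :
    dist (bieleckiPicard hab hW hf l s w) (bieleckiPicard hab hW hf l s' w') ≤ D := by
  rw [ContinuousMap.dist_le hD]
  intro t
  simp only [bieleckiPicard, ContinuousMap.coe_mk, Real.dist_eq]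
  rw [← mul_sub, abs_mul, Real.abs_exp]
  calc _ ≤ Real.exp (-(l * t)) * (D * Real.exp (l * t)) := by gcongr; exact h t t.2
    _ = D := by rw [mul_left_comm, ← Real.exp_add, neg_add_cancel, Real.exp_zero, mul_one]

theorem contractingWith_bieleckiPicard {W f : ℝ → ℝ} {K : NNReal} (hW : Integrable W)
    (hf : LipschitzWith K f) {l : ℝ} (hl : 0 < l) (hKl : 2 * (K * ∫ x, |W x|) ≤ l) (s : ℝ) :
    ContractingWith (1 / 2) (bieleckiPicard hab hW hf.continuous l s) := by
  refine ⟨NNReal.half_lt_self one_ne_zero, LipschitzWith.of_dist_le_mul fun w w' ↦ ?_⟩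
  refine dist_bieleckiPicard_le hab hW hf.continuous (by positivity) fun t ht ↦ ?_
  simpa using abs_picardStep_sub_le hW hf (continuous_bieleckiExtend hab l w)
    (continuous_bieleckiExtend hab l w') hl dist_nonneg s hKl ht.1
    fun x _ ↦ abs_bieleckiExtend_sub_le hab l w w' x

theorem dist_bieleckiPicard_slope_le {W f : ℝ → ℝ} (hW : Integrable W) (hf : Continuous f)
    {l : ℝ} (hl : 0 ≤ l) (s s' : ℝ) (w : C(Icc a b, ℝ)) :
    dist (bieleckiPicard hab hW hf l s w) (bieleckiPicard hab hW hf l s' w) ≤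
      (b - a) * Real.exp (-(l * a)) * |s - s'| := by
  have : 0 ≤ b - a := sub_nonneg.2 hab
  refine dist_bieleckiPicard_le hab hW hf (by positivity) fun t ht ↦ ?_
  rw [picardStep_sub_picardStep_slope hW hf (continuous_bieleckiExtend hab l w), abs_mul,
    abs_of_nonneg (sub_nonneg.2 ht.1)]
  calc (t - a) * |s - s'| ≤ (b - a) * |s - s'| * 1 := by
        rw [mul_one]
        gcongr
        exact ht.2
    _ ≤ (b - a) * |s - s'| * Real.exp (-(l * a) + l * t) := by
        gcongr
        exact Real.one_le_exp (by linarith [mul_le_mul_of_nonneg_left ht.1 hl])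
    _ = (b - a) * Real.exp (-(l * a)) * |s - s'| * Real.exp (l * t) := by
        rw [Real.exp_add]
        ring

theorem eqOn_picardStep_of_isFixedPt {W f : ℝ → ℝ} (hW : Integrable W) (hf : Continuous f)
    {l s : ℝ} {w : C(Icc a b, ℝ)} (hw : Function.IsFixedPt (bieleckiPicard hab hW hf l s) w) :
    EqOn (picardStep W f a s (bieleckiExtend hab l w)) (bieleckiExtend hab l w) (Icc a b) := by
  intro t ht
  have hval := congrArg (fun v : C(Icc a b, ℝ) ↦ v ⟨t, ht⟩) hw.eq
  simp only [bieleckiPicard, ContinuousMap.coe_mk] at hval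
  rw [show bieleckiExtend hab l w t = Real.exp (l * t) * w ⟨t, ht⟩ by
    rw [bieleckiExtend, IccExtend_of_mem hab _ ht], ← hval, ← mul_assoc, ← Real.exp_add,
    add_neg_cancel, Real.exp_zero, one_mul]

end Flow

/-- Solutions vanishing at `a`, parametrised by their slope there, which depend Lipschitz
continuously on that slope over `[a, b]`. -/
structure IsShootingFlow (W f : ℝ → ℝ) (a b : ℝ) (U P : ℝ → ℝ → ℝ) : Prop where
  isSolution : ∀ s, IsSolution W f (U s) (P s)
  apply_left : ∀ s, U s a = 0
  slope_left : ∀ s, P s a = s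
  exists_lipschitz : ∃ C, ∀ s s', ∀ t ∈ Icc a b, |U s t - U s' t| ≤ C * |s - s'|

theorem exists_isShootingFlow {a b : ℝ} (hab : a ≤ b) {W f : ℝ → ℝ} {K : NNReal} (hW : Integrable W)
    (hWout : ∀ t ∉ Icc a b, W t = 0) (hf : LipschitzWith K f) :
    ∃ U P : ℝ → ℝ → ℝ, IsShootingFlow W f a b U P := by
  set l : ℝ := 2 * (K * ∫ x, |W x|) + 1
  have : 0 ≤ ∫ x, |W x| := integral_nonneg fun _ ↦ abs_nonneg _
  have hl : 0 < l := by positivity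
  have hcontr := contractingWith_bieleckiPicard hab hW hf hl (lt_add_one _).le
  let w (s : ℝ) : C(Icc a b, ℝ) := (hcontr s).fixedPoint
  let v (s : ℝ) : ℝ → ℝ := bieleckiExtend hab l (w s)
  have hv (s : ℝ) : Continuous (v s) := continuous_bieleckiExtend hab l (w s)
  have hfix (s : ℝ) : EqOn (picardStep W f a s (v s)) (v s) (Icc a b) :=
    eqOn_picardStep_of_isFixedPt hab hW hf.continuous (hcontr s).fixedPoint_isFixedPt
  refine ⟨fun s ↦ picardStep W f a s (v s), fun s ↦ picardSlope W f a s (v s),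
    fun s ↦ isSolution_of_eqOn_picardStep hW hf.continuous (hv s) hWout (hfix s),
    fun s ↦ by simp [picardStep], fun s ↦ by simp [picardSlope],
    (b - a) * Real.exp (-(l * a)) / (1 / 2) * Real.exp (l * b), fun s s' t ht ↦ ?_⟩
  have hdist : dist (w s) (w s') ≤ (b - a) * Real.exp (-(l * a)) * |s - s'| / (1 - (1 / 2)) := by
    simpa [w] using (hcontr s).fixedPoint_lipschitz_in_map (hcontr s')
      (dist_bieleckiPicard_slope_le hab hW hf.continuous hl.le s s')
  simp only [hfix s ht, hfix s' ht]
  calc |v s t - v s' t| ≤ dist (w s) (w s') * Real.exp (l * t) :=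
        abs_bieleckiExtend_sub_le hab l _ _ t
    _ ≤ (b - a) * Real.exp (-(l * a)) * |s - s'| / (1 - (1 / 2)) * Real.exp (l * b) := by
        have := dist_nonneg.trans hdist
        gcongr
        exact ht.2
    _ = (b - a) * Real.exp (-(l * a)) / (1 / 2) * Real.exp (l * b) * |s - s'| := by ring

/-! ### Solutions across one bump and one gap -/

namespace IsSolution

variable {W f u p : ℝ → ℝ}

theorem continuous (hu : IsSolution W f u p) : Continuous u :=
  continuous_iff_continuousAt.2 fun t ↦ (hu.hasDerivAt t).continuousAt

theorem continuous_slope (hu : IsSolution W f u p) (hW : Integrable W) (hf : Continuous f) :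
    Continuous p := by
  have hp : p = fun t ↦ p 0 - ∫ x in 0..t, W x * f (u x) := by
    ext t
    linarith [hu.slope_sub 0 t]
  rw [hp]
  exact continuous_const.sub (intervalIntegral.continuous_primitive
    (intervalIntegrable_mul_comp hW hf hu.continuous) 0)

section Uniqueness

variable {t₀ : ℝ}

theorem eventually_eq_zero (hu : IsSolution W f u p) (hW : Integrable W)
    (hf : f =O[𝓝 0] (id : ℝ → ℝ)) (hu₀ : u t₀ = 0) (hp₀ : p t₀ = 0) : ∀ᶠ t in 𝓝 t₀, u t = 0 := by
  obtain ⟨K, hK, hfK⟩ := hf.exists_pos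
  set A := K * ∫ t, |W t|
  have : 0 ≤ A := mul_nonneg hK.le (integral_nonneg fun _ ↦ abs_nonneg _)
  have hlin : ∀ᶠ t in 𝓝 t₀, |f (u t)| ≤ K * |u t| :=
    (hu₀ ▸ hu.continuous.tendsto t₀).eventually hfK.bound
  obtain ⟨d₁, hd₁, hball⟩ := Metric.nhds_basis_closedBall.eventually_iff.1 hlin
  set d := min d₁ (1 / (A + 1))
  have hd : 0 < d := by positivity
  have hdA : d * A < 1 := calc
    d * A ≤ 1 / (A + 1) * A := by gcongr; exact min_le_right _ _
    _ < 1 := by rw [one_div, inv_mul_lt_iff₀ (by positivity)]; linarith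
  obtain ⟨z, hz, hmax⟩ := (isCompact_closedBall t₀ d).exists_isMaxOn
    ⟨t₀, Metric.mem_closedBall_self hd.le⟩ hu.continuous.abs.continuousOn
  have hslope : ∀ y ∈ Metric.closedBall t₀ d, ‖p y‖ ≤ A * |u z| := by
    intro y hy
    have hpy : p y = -∫ t in t₀..y, W t * f (u t) := by linarith [hu.slope_sub t₀ y]
    rw [hpy, norm_neg, Real.norm_eq_abs]
    refine (abs_intervalIntegral_mul_le hW (c := K * |u z|) (by positivity) fun t ht ↦ ?_).trans_eq
      (by ring)
    have ht' : t ∈ Metric.closedBall t₀ d :=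
      (Metric.mem_closedBall.2 <| (abs_sub_left_of_mem_uIcc ht).trans (Metric.mem_closedBall.1 hy))
    refine (hball (Metric.closedBall_subset_closedBall (min_le_left _ _) ht')).trans ?_
    exact mul_le_mul_of_nonneg_left (hmax ht') hK.le
  have hgrowth : |u z| ≤ d * A * |u z| := calc
    |u z| = ‖u z - u t₀‖ := by rw [hu₀, sub_zero, Real.norm_eq_abs]
    _ ≤ A * |u z| * ‖z - t₀‖ := Convex.norm_image_sub_le_of_norm_hasDerivWithin_le
        (fun y _ ↦ (hu.hasDerivAt y).hasDerivWithinAt) hslope (convex_closedBall t₀ d)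
        (Metric.mem_closedBall_self hd.le) hz
    _ ≤ A * |u z| * d := by gcongr; exact mem_closedBall_iff_norm.1 hz
    _ = d * A * |u z| := by ring
  have huz : |u z| ≤ 0 := by nlinarith [abs_nonneg (u z)]
  filter_upwards [Metric.closedBall_mem_nhds t₀ hd] with t ht
  exact abs_nonpos_iff.1 ((hmax ht).trans huz)

theorem eq_zero (hu : IsSolution W f u p) (hW : Integrable W) (hf : Continuous f)
    (hf₀ : f =O[𝓝 0] (id : ℝ → ℝ)) (hu₀ : u t₀ = 0) (hp₀ : p t₀ = 0) (t : ℝ) : u t = 0 := by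
  have hclosed : IsClosed {t | u t = 0 ∧ p t = 0} :=
    (isClosed_eq hu.continuous continuous_const).inter
      (isClosed_eq (hu.continuous_slope hW hf) continuous_const)
  have hopen : IsOpen {t | u t = 0 ∧ p t = 0} := by
    refine isOpen_iff_mem_nhds.2 fun t ht ↦ ?_
    have hev := hu.eventually_eq_zero hW hf₀ ht.1 ht.2
    filter_upwards [hev, eventually_eventually_nhds.2 hev] with y hy hy'
    exact ⟨hy, (hu.hasDerivAt y).unique ((hasDerivAt_const y 0).congr_of_eventuallyEq hy')⟩
  have huniv := IsClopen.eq_univ ⟨hclosed, hopen⟩ ⟨t₀, hu₀, hp₀⟩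
  exact (huniv.ge (mem_univ t)).1

end Uniqueness

section Sign

variable {x y t : ℝ}

theorem slope_eq_of_nonpos (hu : IsSolution W f u p) (hf : ∀ v ≤ 0, f v = 0)
    (h : ∀ t ∈ uIcc x y, u t ≤ 0) : p y = p x := by
  have hint : ∫ t in x..y, W t * f (u t) = 0 := by
    rw [intervalIntegral.integral_congr (g := fun _ ↦ 0) fun t ht ↦ by simp [hf _ (h t ht)],
      intervalIntegral.integral_zero]
  linarith [hu.slope_sub x y]

theorem nonneg_on_Icc (hu : IsSolution W f u p) (hf : ∀ v ≤ 0, f v = 0)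
    (hx : 0 ≤ u x) (hy : 0 ≤ u y) (ht : t ∈ Icc x y) : 0 ≤ u t := by
  by_contra! hneg
  obtain ⟨z, hz, hmin⟩ := isCompact_Icc.exists_isMinOn ⟨t, ht⟩ hu.continuous.continuousOn
  have huz : u z < 0 := (hmin ht).trans_lt hneg
  have hxz : x < z := hz.1.lt_of_ne fun h ↦ (h ▸ huz).not_ge hx
  have hzy : z < y := hz.2.lt_of_ne fun h ↦ (h ▸ huz).not_ge hy
  have hpz : p z = 0 :=
    (hmin.isLocalMin (Icc_mem_nhds hxz hzy)).hasDerivAt_eq_zero (hu.hasDerivAt z)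
  obtain ⟨w, hw, huw, hle⟩ := exists_eq_and_forall_uIcc_le (v := 0) hu.continuous.neg
    (neg_nonneg.2 huz.le) (neg_nonpos.2 hy)
  have hzw : z ≤ w := by rw [uIcc_of_le hzy.le] at hw; exact hw.1
  have hp : ∀ q ∈ Icc z w, p q ≤ 0 := fun q hq ↦ by
    rw [hu.slope_eq_of_nonpos hf fun r hr ↦ neg_nonneg.1 (hle r
      (uIcc_subset_uIcc_left (uIcc_of_le hzw ▸ hq) hr)), hpz]
  have := image_sub_le_mul_sub_of_hasDerivAt hu.hasDerivAt hzw hp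
  linarith [neg_eq_zero.1 huw]

theorem neg_of_neg (hu : IsSolution W f u p) (hf : ∀ v ≤ 0, f v = 0) (hx : 0 ≤ u x)
    (ht : u t < 0) (hxt : x ≤ t) (hty : t ≤ y) : u y < 0 := by
  by_contra! hy
  exact ht.not_ge (hu.nonneg_on_Icc hf hx hy ⟨hxt, hty⟩)

theorem nonpos_of_descending_zero (hu : IsSolution W f u p) (hW : Integrable W)
    (hf : Continuous f) (hf₀ : f =O[𝓝 0] (id : ℝ → ℝ)) (hf_nonpos : ∀ v ≤ 0, f v = 0)
    (hut : u t = 0) (hpt : p t ≤ 0) (hty : t ≤ y) : u y ≤ 0 := by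
  by_contra! hy
  have hlt : t < y := hty.lt_of_ne fun h ↦ hy.ne' (h ▸ hut)
  have hslope := hasDerivAt_mul_sub_nonneg_of_forall_uIcc_le (hu.hasDerivAt t) (x := y)
    fun z hz ↦ hut ▸ hu.nonneg_on_Icc hf_nonpos hut.ge hy.le (uIcc_of_le hty ▸ hz)
  have hp0 : p t = 0 := hpt.antisymm (nonneg_of_mul_nonneg_right hslope (sub_pos.2 hlt))
  exact hy.ne' (hu.eq_zero hW hf hf₀ hut hp0 y)

theorem slope_nonpos_of_eq_zero (hu : IsSolution W f u p) (hf : ∀ v ≤ 0, f v = 0)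
    (hx : 0 ≤ u x) (huy : u y = 0) (hxy : x < y) : p y ≤ 0 := by
  have hslope := hasDerivAt_mul_sub_nonneg_of_forall_uIcc_le (hu.hasDerivAt y) (x := x)
    fun z hz ↦ huy ▸ hu.nonneg_on_Icc hf hx huy.ge (uIcc_of_ge hxy.le ▸ hz)
  exact nonpos_of_mul_nonneg_right hslope (sub_neg.2 hxy)

end Sign

section Bump

variable {x y : ℝ}

theorem mul_integral_le_slope_sub {c : ℝ} (hu : IsSolution W f u p) (hW : Integrable W)
    (hf : Continuous f) (hxy : x ≤ y) (hpos : ∀ᵐ t ∂volume.restrict (Icc x y), 0 ≤ W t)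
    (hc : ∀ t ∈ Icc x y, c ≤ f (u t)) : c * ∫ t in x..y, W t ≤ p x - p y := by
  have hmono : ∫ t in x..y, c * W t ≤ ∫ t in x..y, W t * f (u t) := by
    refine intervalIntegral.integral_mono_ae_restrict hxy (hW.intervalIntegrable.const_mul c)
      (intervalIntegrable_mul_comp hW hf hu.continuous x y) ?_
    filter_upwards [hpos, ae_restrict_mem measurableSet_Icc] with t hWt ht
    rw [mul_comm c]
    exact mul_le_mul_of_nonneg_left (hc t ht) hWt
  rw [intervalIntegral.integral_const_mul] at hmono
  linarith [hu.slope_sub x y]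

theorem slope_sub_le_mul_integral {c : ℝ} (hu : IsSolution W f u p) (hW : Integrable W)
    (hf : Continuous f) (hxy : x ≤ y) (hpos : ∀ᵐ t ∂volume.restrict (Icc x y), 0 ≤ W t)
    (hc : ∀ t ∈ Icc x y, f (u t) ≤ c) : p x - p y ≤ c * ∫ t in x..y, W t := by
  have hmono : ∫ t in x..y, W t * f (u t) ≤ ∫ t in x..y, c * W t := by
    refine intervalIntegral.integral_mono_ae_restrict hxy
      (intervalIntegrable_mul_comp hW hf hu.continuous x y) (hW.intervalIntegrable.const_mul c) ?_
    filter_upwards [hpos, ae_restrict_mem measurableSet_Icc] with t hWt ht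
    rw [mul_comm c]
    exact mul_le_mul_of_nonneg_left (hc t ht) hWt
  rw [intervalIntegral.integral_const_mul] at hmono
  linarith [hu.slope_sub x y]

theorem antitoneOn_slope (hu : IsSolution W f u p) (hf : ∀ v, 0 ≤ f v)
    (hpos : ∀ᵐ t ∂volume.restrict (Icc x y), 0 ≤ W t) : AntitoneOn p (Icc x y) := by
  intro s hs t ht hst
  have hint : 0 ≤ ∫ q in s..t, W q * f (u q) := by
    refine intervalIntegral.integral_nonneg_of_ae_restrict hst ?_
    filter_upwards [ae_restrict_of_ae_restrict_of_subset (Icc_subset_Icc hs.1 ht.2) hpos] with q hq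
    exact mul_nonneg hq (hf _)
  linarith [hu.slope_sub s t]

theorem concaveOn (hu : IsSolution W f u p) (hf : ∀ v, 0 ≤ f v)
    (hpos : ∀ᵐ t ∂volume.restrict (Icc x y), 0 ≤ W t) : ConcaveOn ℝ (Icc x y) u := by
  refine AntitoneOn.concaveOn_of_deriv (convex_Icc x y) hu.continuous.continuousOn
    (fun t _ ↦ (hu.hasDerivAt t).differentiableAt.differentiableWithinAt) ?_
  rw [funext fun t ↦ (hu.hasDerivAt t).deriv]
  exact (hu.antitoneOn_slope hf hpos).mono interior_subset

theorem lt_of_superlinear {δ κ L M : ℝ} (hu : IsSolution W f u p) (hW : Integrable W)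
    (hf : Continuous f) (hf_nonneg : ∀ v, 0 ≤ f v)
    (hpos : ∀ᵐ t ∂volume.restrict (Icc x y), 0 ≤ W t) (hnonneg : ∀ t ∈ Icc x y, 0 ≤ u t)
    (hδ : 0 < δ) (hM : 0 < M) (hδxy : 2 * δ ≤ y - x) (hL : y - x ≤ L) (hκ : 0 < κ)
    (hmass : κ ≤ ∫ t in (x + δ)..(y - δ), W t)
    (hgrowth : ∀ v ≥ M * δ / L, 3 * L * v ≤ κ * δ ^ 2 * f v) {t : ℝ} (ht : t ∈ Icc x y) :
    u t < M := by
  obtain ⟨z, hz, hmax⟩ := isCompact_Icc.exists_isMaxOn ⟨t, ht⟩ hu.continuous.continuousOn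
  by_contra! hMt
  have hMz : M ≤ u z := hMt.trans (hmax ht)
  have hanti := hu.antitoneOn_slope hf_nonneg hpos
  have hLpos : 0 < L := by linarith
  have hl : x + δ ∈ Icc x y := ⟨by linarith, by linarith⟩
  have hr : y - δ ∈ Icc x y := ⟨by linarith, by linarith⟩
  have hcore : ∀ q ∈ Icc (x + δ) (y - δ), 3 * u z / (κ * δ) ≤ f (u q) := fun q hq ↦ by
    have hq0 : 0 ≤ u q := hnonneg q ⟨hl.1.trans hq.1, hq.2.trans hr.2⟩
    have hconc : δ * u z ≤ L * u q :=
      (mul_le_mul_of_concaveOn_Icc (hu.concaveOn hf_nonneg hpos) hnonneg hδ.le hz hq).trans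
        (by gcongr)
    have hlarge : u q ≥ M * δ / L := by
      rw [ge_iff_le, div_le_iff₀ hLpos]
      nlinarith
    rw [div_le_iff₀ (by positivity)]
    nlinarith [hgrowth (u q) hlarge]
  have hdrop : 3 * u z ≤ δ * (p (x + δ) - p (y - δ)) := calc
    3 * u z = δ * (3 * u z / (κ * δ) * κ) := by field_simp
    _ ≤ δ * (3 * u z / (κ * δ) * ∫ t in (x + δ)..(y - δ), W t) := by
      have : 0 ≤ u z := hnonneg z hz
      gcongr
    _ ≤ δ * (p (x + δ) - p (y - δ)) := by
      gcongr
      exact hu.mul_integral_le_slope_sub hW hf (by linarith)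
        (ae_restrict_of_ae_restrict_of_subset (Icc_subset_Icc hl.1 hr.2) hpos) hcore
  have hrise := mul_sub_le_image_sub_of_hasDerivAt hu.hasDerivAt hl.1
    fun q hq ↦ hanti ⟨hq.1, hq.2.trans hl.2⟩ hl hq.2
  have hfall := image_sub_le_mul_sub_of_hasDerivAt hu.hasDerivAt hr.2
    fun q hq ↦ hanti hr ⟨hr.1.trans hq.1, hq.2⟩ hq.1
  have hzl : u (x + δ) ≤ u z := hmax hl
  have hzr : u (y - δ) ≤ u z := hmax hr
  linarith [hnonneg x (left_mem_Icc.2 (hl.1.trans hl.2)),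
    hnonneg y (right_mem_Icc.2 (hl.1.trans hl.2))]

theorem neg_le_slope_of_nonneg {δ J M : ℝ} (hu : IsSolution W f u p) (hf_nonneg : ∀ v, 0 ≤ f v)
    (hpos : ∀ᵐ t ∂volume.restrict (Icc x y), 0 ≤ W t) (hδ : 0 < δ) (hδxy : δ ≤ y - x)
    (hM : 0 ≤ M) (hx : u x ≤ M) (hy : 0 ≤ u y) (hJ : p x - p y ≤ J) : -(M / δ + J) ≤ p y := by
  by_contra! hlt
  have hxy : x ≤ y := by linarith
  have hsteep : ∀ t ∈ Icc x y, p t ≤ p x := fun t ht ↦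
    hu.antitoneOn_slope hf_nonneg hpos (left_mem_Icc.2 hxy) ht ht.1
  have hdiff := image_sub_le_mul_sub_of_hasDerivAt hu.hasDerivAt hxy hsteep
  have : p x < -(M / δ) := by linarith
  have hMδ : M / δ * δ ≤ M / δ * (y - x) := by gcongr
  rw [div_mul_cancel₀ M hδ.ne'] at hMδ
  nlinarith

theorem exists_ge_of_steep {δ J M : ℝ} (hu : IsSolution W f u p) (hf_nonneg : ∀ v, 0 ≤ f v)
    (hpos : ∀ᵐ t ∂volume.restrict (Icc x y), 0 ≤ W t) (hδ : 0 < δ) (hδxy : δ ≤ y - x)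
    (hM : 0 ≤ M) (hx : 0 ≤ u x) (hJ : (∀ t ∈ Icc x y, u t ≤ M) → p x - p y ≤ J)
    (hp : M / δ + J ≤ p x) : ∃ t ∈ Icc x y, M ≤ u t := by
  by_contra! hlt
  have hxy : x ≤ y := by linarith
  have hrise := mul_sub_le_image_sub_of_hasDerivAt hu.hasDerivAt hxy fun t ht ↦
    hu.antitoneOn_slope hf_nonneg hpos ht (right_mem_Icc.2 hxy) ht.2
  have hpy : M / δ ≤ p y := by linarith [hJ fun t ht ↦ (hlt t ht).le]
  have hMδ : M / δ * δ ≤ M / δ * (y - x) := by gcongr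
  rw [div_mul_cancel₀ M hδ.ne'] at hMδ
  nlinarith [hlt y (right_mem_Icc.2 hxy)]

end Bump

section Gap

variable {x y : ℝ}

theorem monotoneOn_slope (hu : IsSolution W f u p) (hf : ∀ v, 0 ≤ f v)
    (hneg : ∀ᵐ t ∂volume.restrict (Icc x y), W t ≤ 0) : MonotoneOn p (Icc x y) := by
  intro s hs t ht hst
  have hint : 0 ≤ ∫ q in s..t, -(W q * f (u q)) := by
    refine intervalIntegral.integral_nonneg_of_ae_restrict hst ?_
    filter_upwards [ae_restrict_of_ae_restrict_of_subset (Icc_subset_Icc hs.1 ht.2) hneg] with q hq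
    exact neg_nonneg.2 (mul_nonpos_of_nonpos_of_nonneg hq (hf _))
  rw [intervalIntegral.integral_neg] at hint
  linarith [hu.slope_sub s t]

theorem convexOn (hu : IsSolution W f u p) (hf : ∀ v, 0 ≤ f v)
    (hneg : ∀ᵐ t ∂volume.restrict (Icc x y), W t ≤ 0) : ConvexOn ℝ (Icc x y) u := by
  refine MonotoneOn.convexOn_of_deriv (convex_Icc x y) hu.continuous.continuousOn
    (fun t _ ↦ (hu.hasDerivAt t).differentiableAt.differentiableWithinAt) ?_
  rw [funext fun t ↦ (hu.hasDerivAt t).deriv]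
  exact (hu.monotoneOn_slope hf hneg).mono interior_subset

theorem slope_add_mul_le {c Λ : ℝ} (hu : IsSolution W f u p) (hW : Integrable W)
    (hf : Continuous f) (hxy : x ≤ y) (hneg : ∀ᵐ t ∂volume.restrict (Icc x y), W t ≤ 0)
    (hΛ : ∫ t in x..y, W t ≤ -Λ) (hc0 : 0 ≤ c) (hc : ∀ t ∈ Icc x y, c ≤ f (u t)) :
    p x + c * Λ ≤ p y := by
  have hmono : ∫ t in x..y, W t * f (u t) ≤ ∫ t in x..y, c * W t := by
    refine intervalIntegral.integral_mono_ae_restrict hxy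
      (intervalIntegrable_mul_comp hW hf hu.continuous x y) (hW.intervalIntegrable.const_mul c) ?_
    filter_upwards [hneg, ae_restrict_mem measurableSet_Icc] with t hWt ht
    rw [mul_comm c]
    exact mul_le_mul_of_nonpos_left (hc t ht) hWt
  rw [intervalIntegral.integral_const_mul] at hmono
  linarith [hu.slope_sub x y, mul_le_mul_of_nonneg_left hΛ hc0]

theorem neg_le_slope_of_gap {c Λ δ ε : ℝ} (hu : IsSolution W f u p) (hW : Integrable W)
    (hf : Continuous f) (hf_nonneg : ∀ v, 0 ≤ f v)
    (hneg : ∀ᵐ t ∂volume.restrict (Icc x y), W t ≤ 0) (hδ : 0 ≤ δ) (hδxy : δ ≤ y - x)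
    (hΛ : ∫ t in x..(y - δ), W t ≤ -Λ) (hε : 0 ≤ ε) (hc0 : 0 ≤ c) (hc : ∀ v ≥ ε * δ, c ≤ f v)
    (hp : -(c * Λ) ≤ p x) (hy : 0 ≤ u y) : -ε ≤ p y := by
  by_contra! hlt
  have hxδ : x ≤ y - δ := by linarith
  have hmem : ∀ t ∈ Icc x (y - δ), t ∈ Icc x y := fun t ht ↦ ⟨ht.1, by linarith [ht.2]⟩
  have hy_mem : y ∈ Icc x y := right_mem_Icc.2 (by linarith)
  have hmono := hu.monotoneOn_slope hf_nonneg hneg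
  have hhigh : ∀ t ∈ Icc x (y - δ), c ≤ f (u t) := fun t ht ↦ by
    have hdescent := image_sub_le_mul_sub_of_hasDerivAt hu.hasDerivAt (hmem t ht).2 fun q hq ↦
      (hmono ⟨ht.1.trans hq.1, hq.2⟩ hy_mem hq.2).trans hlt.le
    refine hc _ ?_
    nlinarith [ht.2]
  have hgain := hu.slope_add_mul_le hW hf hxδ
    (ae_restrict_of_ae_restrict_of_subset (fun t ht ↦ hmem t ht) hneg) hΛ hc0 hhigh
  linarith [hmono (hmem _ (right_mem_Icc.2 hxδ)) hy_mem (by linarith)]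

end Gap

end IsSolution

/-! ### Chains of bumps -/

/-- Nodes splitting `[τ 0, σ (m + 1)]` into bumps `[σ (i + 1), τ (i + 1)]`, `i < m`, and gaps
`[τ i, σ (i + 1)]`, `i ≤ m`. Bumps are counted from `0`, so that the paper's `I_{i+1}⁺` is bump
`i`, and only gaps may be degenerate. -/
structure AlternatingNodes (m : ℕ) (σ τ : ℕ → ℝ) : Prop where
  gap_le : ∀ i ≤ m, τ i ≤ σ (i + 1)
  bump_lt : ∀ i < m, σ (i + 1) < τ (i + 1)

namespace AlternatingNodes

variable {m : ℕ} {σ τ : ℕ → ℝ}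

theorem of_lt (hfirst : τ 0 ≤ σ 1) (hlast : τ m ≤ σ (m + 1))
    (hbump : ∀ i, 1 ≤ i → i ≤ m → σ i < τ i) (hgap : ∀ i, 1 ≤ i → i < m → τ i < σ (i + 1)) :
    AlternatingNodes m σ τ where
  gap_le i hi := by
    rcases hi.eq_or_lt with rfl | him
    · exact hlast
    · rcases i.eq_zero_or_pos with rfl | hi₀
      exacts [hfirst, (hgap i hi₀ him).le]
  bump_lt i hi := hbump (i + 1) (by lia) hi

theorem τ_le_τ (h : AlternatingNodes m σ τ) {i j : ℕ} (hij : i ≤ j) (hj : j ≤ m) :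
    τ i ≤ τ j := by
  induction j, hij using Nat.le_induction with
  | base => exact le_rfl
  | succ j _ ih =>
    exact (ih (by lia)).trans <| (h.gap_le j (by lia)).trans (h.bump_lt j (by lia)).le

theorem gap_subset (h : AlternatingNodes m σ τ) {i : ℕ} (hi : i ≤ m) :
    Icc (τ i) (σ (i + 1)) ⊆ Icc (τ 0) (σ (m + 1)) := by
  refine Icc_subset_Icc (h.τ_le_τ i.zero_le hi) ?_
  rcases hi.eq_or_lt with rfl | hlt
  · exact le_rfl
  · exact (h.bump_lt i hlt).le.trans <| (h.τ_le_τ hlt le_rfl).trans (h.gap_le m le_rfl)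

theorem bump_subset (h : AlternatingNodes m σ τ) {i : ℕ} (hi : i < m) :
    Icc (σ (i + 1)) (τ (i + 1)) ⊆ Icc (τ 0) (σ (m + 1)) :=
  Icc_subset_Icc ((h.τ_le_τ i.zero_le hi.le).trans (h.gap_le i hi.le))
    ((h.τ_le_τ hi le_rfl).trans (h.gap_le m le_rfl))

theorem left_le_σ (h : AlternatingNodes m σ τ) {i : ℕ} (hi : i ≤ m) : τ 0 ≤ σ (i + 1) :=
  (h.τ_le_τ i.zero_le hi).trans (h.gap_le i hi)

end AlternatingNodes

theorem exists_mem_bump_or_mem_gap {m : ℕ} {σ τ : ℕ → ℝ} {t : ℝ}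
    (ht : t ∈ Icc (τ 0) (σ (m + 1))) :
    (∃ i < m, t ∈ Icc (σ (i + 1)) (τ (i + 1))) ∨ ∃ i ≤ m, t ∈ Icc (τ i) (σ (i + 1)) := by
  suffices ∀ k ≤ m, t ≤ σ (k + 1) →
      (∃ i < m, t ∈ Icc (σ (i + 1)) (τ (i + 1))) ∨ ∃ i ≤ m, t ∈ Icc (τ i) (σ (i + 1)) from
    this m le_rfl ht.2
  intro k hk htk
  induction k with
  | zero => exact Or.inr ⟨0, hk, ht.1, htk⟩
  | succ k ih =>
    by_cases hgap : τ (k + 1) ≤ t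
    · exact Or.inr ⟨k + 1, hk, hgap, htk⟩
    · by_cases hbump : σ (k + 1) ≤ t
      · exact Or.inl ⟨k, hk, hbump, (not_le.1 hgap).le⟩
      · exact ih (by lia) (not_le.1 hbump).le

/-- A weight on `[τ 0, σ (m + 1)]` that is nonnegative on the bumps and nonpositive on the gaps,
with the quantitative data of the shooting argument: the margin `δ` by which bumps and interior
gaps are shrunk also bounds from below the mass of every shrunk bump, `I` bounds the mass of the
bumps, and `Λ` (which grows with the parameter `μ`) bounds from below the mass of `-W` on the
interior gaps. -/
structure BumpWeight (m : ℕ) (σ τ : ℕ → ℝ) (δ I Λ : ℝ) (W : ℝ → ℝ) : Prop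
    extends AlternatingNodes m σ τ where
  integrable : Integrable W
  eq_zero : ∀ t ∉ Icc (τ 0) (σ (m + 1)), W t = 0
  margin_pos : 0 < δ
  margin_bump : ∀ i < m, 2 * δ ≤ τ (i + 1) - σ (i + 1)
  margin_gap : ∀ i, i + 1 < m → δ ≤ σ (i + 2) - τ (i + 1)
  nonneg_bump : ∀ i < m, ∀ᵐ t ∂volume.restrict (Icc (σ (i + 1)) (τ (i + 1))), 0 ≤ W t
  nonpos_gap : ∀ i ≤ m, ∀ᵐ t ∂volume.restrict (Icc (τ i) (σ (i + 1))), W t ≤ 0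
  core_mass : ∀ i < m, δ ≤ ∫ t in (σ (i + 1) + δ)..(τ (i + 1) - δ), W t
  bump_mass : ∀ i < m, ∫ t in (σ (i + 1))..(τ (i + 1)), W t ≤ I
  gap_mass : ∀ i, i + 1 < m → ∫ t in (τ (i + 1))..(σ (i + 2) - δ), W t ≤ -Λ

/-- The bounds on a nonlinearity `f` that drive the shooting argument on an interval of length `L`
against a weight with margin `δ`, bump mass `I` and gap mass `Λ`. A nonnegative solution stays
below `M` on every bump, and the height of a small bump is measured against `r`. In `superlinear`,
one factor `δ` bounds the mass of a shrunk bump, and `δ ^ 2` is the square of the margin. -/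
structure ShootingBounds (L δ I Λ M r C c : ℝ) (f : ℝ → ℝ) : Prop where
  continuous : Continuous f
  nonneg : ∀ v, 0 ≤ f v
  eq_zero : ∀ v ≤ 0, f v = 0
  isBigO_id : f =O[𝓝 0] (id : ℝ → ℝ)
  mass_pos : 0 < I
  r_pos : 0 < r
  r_le : r ≤ M
  c_pos : 0 < c
  le_of_le : ∀ v ≤ M, f v ≤ C
  superlinear : ∀ v ≥ M * δ / L, 3 * L * v ≤ δ * δ ^ 2 * f v
  sublinear : ∀ v ≤ r, f v ≤ r / (8 * L * I)
  le_of_ge : ∀ v ≥ r / (8 * L) * δ, c ≤ f v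
  barrier : M / δ + C * I ≤ c * Λ

namespace BumpWeight

variable {m i : ℕ} {σ τ : ℕ → ℝ} {δ I Λ M r C c : ℝ} {W f u p : ℝ → ℝ}

theorem margin_le_length (hW : BumpWeight m σ τ δ I Λ W) (hi : i < m) :
    2 * δ ≤ σ (m + 1) - τ 0 := by
  have hsub := hW.bump_subset hi
  have hbump := (hW.bump_lt i hi).le
  linarith [hW.margin_bump i hi, (hsub (left_mem_Icc.2 hbump)).1, (hsub (right_mem_Icc.2 hbump)).2]

theorem bump_length_le (hW : BumpWeight m σ τ δ I Λ W) (hi : i < m) :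
    τ (i + 1) - σ (i + 1) ≤ σ (m + 1) - τ 0 := by
  have hsub := hW.bump_subset hi
  have hbump := (hW.bump_lt i hi).le
  linarith [(hsub (left_mem_Icc.2 hbump)).1, (hsub (right_mem_Icc.2 hbump)).2]

theorem length_pos (hW : BumpWeight m σ τ δ I Λ W) (hi : i < m) : 0 < σ (m + 1) - τ 0 := by
  linarith [hW.margin_le_length hi, hW.margin_pos]

theorem lt_of_mem_bump (hW : BumpWeight m σ τ δ I Λ W)
    (hf : ShootingBounds (σ (m + 1) - τ 0) δ I Λ M r C c f) (hu : IsSolution W f u p)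
    (hi : i < m) (hσ : 0 ≤ u (σ (i + 1))) (hτ : 0 ≤ u (τ (i + 1))) {t : ℝ}
    (ht : t ∈ Icc (σ (i + 1)) (τ (i + 1))) : u t < M :=
  hu.lt_of_superlinear hW.integrable hf.continuous hf.nonneg (hW.nonneg_bump i hi)
    (fun _ hz ↦ hu.nonneg_on_Icc hf.eq_zero hσ hτ hz) hW.margin_pos (hf.r_pos.trans_le hf.r_le)
    (hW.margin_bump i hi) (hW.bump_length_le hi) hW.margin_pos (hW.core_mass i hi)
    hf.superlinear ht

theorem slope_sub_le_of_le (hW : BumpWeight m σ τ δ I Λ W)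
    (hf : ShootingBounds (σ (m + 1) - τ 0) δ I Λ M r C c f) (hu : IsSolution W f u p)
    (hi : i < m) {K : ℝ} (hK : ∀ t ∈ Icc (σ (i + 1)) (τ (i + 1)), f (u t) ≤ K) :
    p (σ (i + 1)) - p (τ (i + 1)) ≤ K * I := by
  have hle := (hW.bump_lt i hi).le
  have hK0 : 0 ≤ K := (hf.nonneg _).trans (hK _ (left_mem_Icc.2 hle))
  refine (hu.slope_sub_le_mul_integral hW.integrable hf.continuous hle (hW.nonneg_bump i hi)
    hK).trans ?_
  gcongr
  exact hW.bump_mass i hi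

theorem neg_le_slope_bump_end (hW : BumpWeight m σ τ δ I Λ W)
    (hf : ShootingBounds (σ (m + 1) - τ 0) δ I Λ M r C c f) (hu : IsSolution W f u p)
    (hi : i < m) (hσ : 0 ≤ u (σ (i + 1))) (hτ : 0 ≤ u (τ (i + 1))) :
    -(M / δ + C * I) ≤ p (τ (i + 1)) := by
  have hlt : ∀ t ∈ Icc (σ (i + 1)) (τ (i + 1)), u t < M := fun _ ↦
    hW.lt_of_mem_bump hf hu hi hσ hτ
  refine hu.neg_le_slope_of_nonneg hf.nonneg (hW.nonneg_bump i hi) hW.margin_pos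
    (by linarith [hW.margin_bump i hi, hW.margin_pos]) (hf.r_pos.le.trans hf.r_le)
    (hlt _ (left_mem_Icc.2 (hW.bump_lt i hi).le)).le hτ
    (hW.slope_sub_le_of_le hf hu hi fun t ht ↦ hf.le_of_le _ (hlt t ht).le)

theorem neg_le_slope_bump_start (hW : BumpWeight m σ τ δ I Λ W)
    (hf : ShootingBounds (σ (m + 1) - τ 0) δ I Λ M r C c f) (hu : IsSolution W f u p)
    (hi : i < m) (ha : 0 ≤ u (τ 0)) (hpa : 0 ≤ p (τ 0)) (hσ : 0 ≤ u (σ (i + 1))) :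
    -(r / (8 * (σ (m + 1) - τ 0))) ≤ p (σ (i + 1)) := by
  have hε : 0 ≤ r / (8 * (σ (m + 1) - τ 0)) := by
    have := hf.r_pos
    have := hW.length_pos hi
    positivity
  have hgap := hW.gap_le i hi.le
  cases i with
  | zero =>
    linarith [hu.monotoneOn_slope hf.nonneg (hW.nonpos_gap 0 hi.le) (left_mem_Icc.2 hgap)
      (right_mem_Icc.2 hgap) hgap]
  | succ j =>
    have hbump := hW.bump_lt j (by lia)
    have hnonneg : ∀ t ∈ Icc (τ 0) (σ (j + 2)), 0 ≤ u t := fun _ ↦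
      hu.nonneg_on_Icc hf.eq_zero ha hσ
    have hslope := hW.neg_le_slope_bump_end hf hu (i := j) (by lia)
      (hnonneg _ ⟨hW.left_le_σ (by lia), hbump.le.trans hgap⟩)
      (hnonneg _ ⟨hW.τ_le_τ (by lia) hi.le, hgap⟩)
    exact hu.neg_le_slope_of_gap hW.integrable hf.continuous hf.nonneg (hW.nonpos_gap _ hi.le)
      hW.margin_pos.le (hW.margin_gap j hi) (hW.gap_mass j hi) hε hf.c_pos.le hf.le_of_ge
      (by linarith [hf.barrier]) hσ

theorem neg_le_slope_of_peak_le (hW : BumpWeight m σ τ δ I Λ W)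
    (hf : ShootingBounds (σ (m + 1) - τ 0) δ I Λ M r C c f) (hu : IsSolution W f u p)
    (hi : i < m) (ha : 0 ≤ u (τ 0)) (hpa : 0 ≤ p (τ 0)) (hσ : 0 ≤ u (σ (i + 1)))
    (hpeak : peak u (σ (i + 1)) (τ (i + 1)) ≤ r) {t : ℝ} (ht : t ∈ Icc (σ (i + 1)) (σ (i + 2))) :
    -(r / (4 * (σ (m + 1) - τ 0))) ≤ p t := by
  have hbump := (hW.bump_lt i hi).le
  have hstart := hW.neg_le_slope_bump_start hf hu hi ha hpa hσ
  have hdrop := hW.slope_sub_le_of_le hf hu hi fun t ht ↦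
    hf.sublinear (u t) ((le_peak hu.continuous ht).trans hpeak)
  have hsum : r / (4 * (σ (m + 1) - τ 0)) =
      r / (8 * (σ (m + 1) - τ 0)) + r / (8 * (σ (m + 1) - τ 0) * I) * I := by
    have := hW.length_pos hi
    have := hf.mass_pos
    field_simp
    ring
  have hend : -(r / (4 * (σ (m + 1) - τ 0))) ≤ p (τ (i + 1)) := by linarith
  rcases le_total t (τ (i + 1)) with htτ | hτt
  · exact hend.trans (hu.antitoneOn_slope hf.nonneg (hW.nonneg_bump i hi) ⟨ht.1, htτ⟩
      (right_mem_Icc.2 hbump) htτ)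
  · exact hend.trans (hu.monotoneOn_slope hf.nonneg (hW.nonpos_gap (i + 1) hi)
      (left_mem_Icc.2 (hW.gap_le _ hi)) ⟨hτt, ht.2⟩ hτt)

theorem quarter_le_of_peak_mem (hW : BumpWeight m σ τ δ I Λ W)
    (hf : ShootingBounds (σ (m + 1) - τ 0) δ I Λ M r C c f) (hu : IsSolution W f u p)
    (hi : i < m) (ha : 0 ≤ u (τ 0)) (hpa : 0 ≤ p (τ 0)) (hσ : 0 ≤ u (σ (i + 1)))
    (hpeak : peak u (σ (i + 1)) (τ (i + 1)) ∈ Icc (r / 2) r) {t : ℝ}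
    (ht : t ∈ Icc (τ (i + 1)) (σ (i + 2))) : r / 4 ≤ u t := by
  have hL := hW.length_pos hi
  obtain ⟨z, hz, huz⟩ := exists_eq_peak hu.continuous (hW.bump_lt i hi).le
  have hzt : z ≤ t := hz.2.trans ht.1
  have hdescent := mul_sub_le_image_sub_of_hasDerivAt hu.hasDerivAt hzt fun q hq ↦
    hW.neg_le_slope_of_peak_le hf hu hi ha hpa hσ hpeak.2 ⟨hz.1.trans hq.1, hq.2.trans ht.2⟩
  have hlen : t - z ≤ σ (m + 1) - τ 0 := by
    linarith [(hW.bump_subset hi hz).1, (hW.gap_subset (i := i + 1) hi ht).2]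
  have hdrop : r / (4 * (σ (m + 1) - τ 0)) * (t - z) ≤ r / 4 := calc
    _ ≤ r / (4 * (σ (m + 1) - τ 0)) * (σ (m + 1) - τ 0) := by
      have := hf.r_pos
      gcongr
    _ = r / 4 := by field_simp
  linarith [hpeak.1]

theorem le_next_bump_of_peak_mem (hW : BumpWeight m σ τ δ I Λ W)
    (hf : ShootingBounds (σ (m + 1) - τ 0) δ I Λ M r C c f) (hu : IsSolution W f u p)
    (hi : i + 1 < m) (ha : 0 ≤ u (τ 0)) (hpa : 0 ≤ p (τ 0)) (hσ : 0 ≤ u (σ (i + 1)))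
    (hpeak : peak u (σ (i + 1)) (τ (i + 1)) ∈ Icc (r / 2) r) : M ≤ u (σ (i + 2)) := by
  have him : i < m := by lia
  have hδ := hW.margin_pos
  have hr := hf.r_pos
  have hL := hW.length_pos him
  have hδL := hW.margin_le_length him
  have hmargin := hW.margin_gap i hi
  have hquarter : ∀ t ∈ Icc (τ (i + 1)) (σ (i + 2)), r / 4 ≤ u t := fun _ ↦
    hW.quarter_le_of_peak_mem hf hu him ha hpa hσ hpeak
  have hend : σ (i + 2) - δ ∈ Icc (τ (i + 1)) (σ (i + 2)) := ⟨by linarith, by linarith⟩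
  have hrδ : r / (8 * (σ (m + 1) - τ 0)) * δ ≤ r / 4 := by
    rw [div_mul_eq_mul_div, div_le_iff₀ (by positivity)]
    nlinarith
  have hgain := hu.slope_add_mul_le hW.integrable hf.continuous hend.1
    (ae_restrict_of_ae_restrict_of_subset (Icc_subset_Icc_right hend.2)
      (hW.nonpos_gap (i + 1) him)) (hW.gap_mass i hi) hf.c_pos.le
    fun t ht ↦ hf.le_of_ge _ (hrδ.trans (hquarter t ⟨ht.1, ht.2.trans hend.2⟩))
  have hslope := hW.neg_le_slope_of_peak_le hf hu him ha hpa hσ hpeak.2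
    (t := τ (i + 1)) ⟨(hW.bump_lt i him).le, hW.gap_le _ him⟩
  have hrise := mul_sub_le_image_sub_of_hasDerivAt hu.hasDerivAt hend.2 fun q hq ↦
    hu.monotoneOn_slope hf.nonneg (hW.nonpos_gap (i + 1) him) hend ⟨hend.1.trans hq.1, hq.2⟩ hq.1
  have hC : 0 ≤ C * I :=
    mul_nonneg ((hf.nonneg M).trans (hf.le_of_le M le_rfl)) hf.mass_pos.le
  have hslope_mul : (M / δ - r / (4 * (σ (m + 1) - τ 0))) * δ ≤ p (σ (i + 2) - δ) * δ := by
    gcongr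
    linarith [hf.barrier]
  have hloss : r / (4 * (σ (m + 1) - τ 0)) * δ ≤ r / 4 := by
    rw [div_mul_eq_mul_div, div_le_iff₀ (by positivity)]
    nlinarith
  rw [sub_mul, div_mul_cancel₀ M hδ.ne'] at hslope_mul
  linarith [hquarter _ hend]

theorem peak_lt_half (hW : BumpWeight m σ τ δ I Λ W)
    (hf : ShootingBounds (σ (m + 1) - τ 0) δ I Λ M r C c f) (hu : IsSolution W f u p)
    (hi : i < m) (ha : 0 ≤ u (τ 0)) (hpa : 0 ≤ p (τ 0)) (hb : u (σ (m + 1)) = 0)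
    (hpeak : peak u (σ (i + 1)) (τ (i + 1)) ≤ r) :
    peak u (σ (i + 1)) (τ (i + 1)) < r / 2 := by
  by_contra! hhalf
  have hnonneg : ∀ t ∈ Icc (τ 0) (σ (m + 1)), 0 ≤ u t := fun _ ↦
    hu.nonneg_on_Icc hf.eq_zero ha hb.ge
  have hnonneg_bump : ∀ j < m, ∀ t ∈ Icc (σ (j + 1)) (τ (j + 1)), 0 ≤ u t := fun _ hj _ ht ↦
    hnonneg _ (hW.bump_subset hj ht)
  have hσ := hnonneg_bump i hi _ (left_mem_Icc.2 (hW.bump_lt i hi).le)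
  rcases Nat.succ_le_of_lt hi |>.eq_or_lt with rfl | hlt
  · have := hW.quarter_le_of_peak_mem hf hu hi ha hpa hσ ⟨hhalf, hpeak⟩
      (right_mem_Icc.2 (hW.gap_le (i + 1) hi))
    linarith [hf.r_pos]
  · have hbump := (hW.bump_lt (i + 1) hlt).le
    exact (hW.le_next_bump_of_peak_mem hf hu hlt ha hpa hσ ⟨hhalf, hpeak⟩).not_gt
      (hW.lt_of_mem_bump hf hu hlt (hnonneg_bump _ hlt _ (left_mem_Icc.2 hbump))
        (hnonneg_bump _ hlt _ (right_mem_Icc.2 hbump)) (left_mem_Icc.2 hbump))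

theorem mem_Icc_of_boundary (hW : BumpWeight m σ τ δ I Λ W)
    (hf : ShootingBounds (σ (m + 1) - τ 0) δ I Λ M r C c f) (hu : IsSolution W f u p)
    (ha : u (τ 0) = 0) (hb : u (σ (m + 1)) = 0) {t : ℝ} (ht : t ∈ Icc (τ 0) (σ (m + 1))) :
    u t ∈ Icc 0 M := by
  have hM : 0 ≤ M := hf.r_pos.le.trans hf.r_le
  have hnonneg : ∀ t ∈ Icc (τ 0) (σ (m + 1)), 0 ≤ u t := fun _ ↦
    hu.nonneg_on_Icc hf.eq_zero ha.ge hb.ge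
  have hbump : ∀ i < m, ∀ t ∈ Icc (σ (i + 1)) (τ (i + 1)), u t ≤ M := fun i hi t ht ↦
    have hle := (hW.bump_lt i hi).le
    (hW.lt_of_mem_bump hf hu hi (hnonneg _ (hW.bump_subset hi (left_mem_Icc.2 hle)))
      (hnonneg _ (hW.bump_subset hi (right_mem_Icc.2 hle))) ht).le
  refine ⟨hnonneg t ht, ?_⟩
  rcases exists_mem_bump_or_mem_gap ht with ⟨i, hi, hti⟩ | ⟨i, hi, hti⟩
  · exact hbump i hi t hti
  · have hleft : u (τ i) ≤ M := by
      cases i with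
      | zero => exact ha.trans_le hM
      | succ i => exact hbump i hi _ (right_mem_Icc.2 (hW.bump_lt i hi).le)
    have hright : u (σ (i + 1)) ≤ M := by
      rcases hi.eq_or_lt with rfl | hlt
      · exact hb.trans_le hM
      · exact hbump i hlt _ (left_mem_Icc.2 (hW.bump_lt i hlt).le)
    have hle := hW.gap_le i hi
    exact ((hu.convexOn hf.nonneg (hW.nonpos_gap i hi)).le_max_of_mem_Icc (left_mem_Icc.2 hle)
      (right_mem_Icc.2 hle) hti).trans (max_le hleft hright)

end BumpWeight

namespace IsShootingFlow

variable {W f : ℝ → ℝ} {a b : ℝ} {U P : ℝ → ℝ → ℝ}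

theorem continuous_apply (hU : IsShootingFlow W f a b U P) {t : ℝ} (ht : t ∈ Icc a b) :
    Continuous fun s ↦ U s t := by
  obtain ⟨C, hC⟩ := hU.exists_lipschitz
  exact (LipschitzWith.of_dist_le' fun s s' ↦ hC s s' t ht).continuous

theorem continuous_peak (hU : IsShootingFlow W f a b U P) {x y : ℝ} (hxy : x ≤ y)
    (hsub : Icc x y ⊆ Icc a b) : Continuous fun s ↦ peak (U s) x y := by
  obtain ⟨C, hC⟩ := hU.exists_lipschitz
  exact (LipschitzWith.of_dist_le' fun s s' ↦
    abs_peak_sub_peak_le (hU.isSolution s).continuous (hU.isSolution s').continuous hxy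
      fun t ht ↦ hC s s' t (hsub ht)).continuous

end IsShootingFlow

/-- On each of the first `k` bumps, the peak of `u` is at least `r₁` if the bump is labelled
`large`, and at most `r₀` otherwise. -/
def FollowsItinerary (σ τ : ℕ → ℝ) (large : ℕ → Prop) (r₀ r₁ : ℝ) (k : ℕ) (u : ℝ → ℝ) : Prop :=
  ∀ i < k, (large i → r₁ ≤ peak u (σ (i + 1)) (τ (i + 1))) ∧
    (¬large i → peak u (σ (i + 1)) (τ (i + 1)) ≤ r₀)

/-- A segment of initial slopes in `[0, S]` along which the first `k` bumps obey the itinerary and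
which stretches across bump `k`: from a solution exceeding `M` there (if `k < m`) to one that
reaches zero, descending, where bump `k` starts. The endpoints are not ordered. -/
structure IsShootingSegment (m : ℕ) (σ τ : ℕ → ℝ) (large : ℕ → Prop) (S M r : ℝ)
    (U P : ℝ → ℝ → ℝ) (k : ℕ) (s₀ s₁ : ℝ) : Prop where
  slope_mem : ∀ s ∈ uIcc s₀ s₁, s ∈ Icc 0 S
  nonneg : ∀ s ∈ uIcc s₀ s₁, 0 ≤ U s (σ (k + 1))
  itinerary : ∀ s ∈ uIcc s₀ s₁, FollowsItinerary σ τ large r r k (U s)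
  le_peak_left : k < m → M ≤ peak (U s₀) (σ (k + 1)) (τ (k + 1))
  apply_right : U s₁ (σ (k + 1)) = 0
  slope_right : P s₁ (σ (k + 1)) ≤ 0

namespace IsShootingSegment

variable {m k : ℕ} {σ τ : ℕ → ℝ} {large : ℕ → Prop} {δ I Λ M r C c S s₀ s₁ : ℝ} {W f : ℝ → ℝ}
  {U P : ℝ → ℝ → ℝ}

theorem zero (hW : BumpWeight m σ τ δ I Λ W)
    (hf : ShootingBounds (σ (m + 1) - τ 0) δ I Λ M r C c f)
    (hU : IsShootingFlow W f (τ 0) (σ (m + 1)) U P) :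
    IsShootingSegment m σ τ large (c * Λ) M r U P 0 (c * Λ) 0 := by
  have hM : 0 ≤ M := hf.r_pos.le.trans hf.r_le
  have hC : 0 ≤ C := (hf.nonneg M).trans (hf.le_of_le M le_rfl)
  have hδ := hW.margin_pos
  have hS : 0 ≤ c * Λ := by
    have := hf.mass_pos
    exact le_trans (by positivity) hf.barrier
  have hgap := hW.gap_le 0 m.zero_le
  have hslope (s : ℝ) : ∀ t ∈ Icc (τ 0) (σ 1), s ≤ P s t := fun t ht ↦ by
    have hmono := (hU.isSolution s).monotoneOn_slope hf.nonneg (hW.nonpos_gap 0 m.zero_le)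
      (left_mem_Icc.2 hgap) ht ht.1
    rwa [hU.slope_left s] at hmono
  have hnonneg (s : ℝ) (hs : 0 ≤ s) : 0 ≤ U s (σ 1) := by
    have hrise := mul_sub_le_image_sub_of_hasDerivAt (hU.isSolution s).hasDerivAt hgap (hslope s)
    rw [hU.apply_left s, sub_zero] at hrise
    exact (mul_nonneg hs (sub_nonneg.2 hgap)).trans hrise
  have hzero : ∀ t, U 0 t = 0 := (hU.isSolution 0).eq_zero hW.integrable hf.continuous
    hf.isBigO_id (hU.apply_left 0) (hU.slope_left 0)
  have hP : P 0 (σ 1) = 0 :=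
    ((hU.isSolution 0).hasDerivAt (σ 1)).unique (by simpa [funext hzero] using hasDerivAt_const _ _)
  refine ⟨fun s hs ↦ uIcc_of_ge hS ▸ hs, fun s hs ↦ hnonneg s (uIcc_of_ge hS ▸ hs).1,
    fun _ _ i hi ↦ absurd hi i.not_lt_zero, fun hm ↦ ?_, hzero _, hP.le⟩
  have hu := hU.isSolution (c * Λ)
  obtain ⟨t, ht, hMt⟩ := hu.exists_ge_of_steep hf.nonneg (hW.nonneg_bump 0 hm) hδ
    (by linarith [hW.margin_bump 0 hm]) hM (hnonneg _ hS)
    (fun hle ↦ hW.slope_sub_le_of_le hf hu hm fun t ht ↦ hf.le_of_le _ (hle t ht))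
    (hf.barrier.trans (hslope _ _ (right_mem_Icc.2 hgap)))
  exact hMt.trans (le_peak hu.continuous ht)

theorem nonpos_of_mem_endpoints (hs : IsShootingSegment m σ τ large S M r U P k s₀ s₁)
    (hW : BumpWeight m σ τ δ I Λ W) (hf : ShootingBounds (σ (m + 1) - τ 0) δ I Λ M r C c f)
    (hU : IsShootingFlow W f (τ 0) (σ (m + 1)) U P) (hk : k < m) :
    ∀ e ∈ ({s₀, s₁} : Set ℝ), U e (σ (k + 2)) ≤ 0 := by
  have hbump := (hW.bump_lt k hk).le
  have hgap := hW.gap_le (k + 1) hk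
  rintro e (rfl | rfl)
  · have hσ := hs.nonneg e left_mem_uIcc
    have hτ : U e (τ (k + 1)) < 0 := by
      by_contra! hτ
      obtain ⟨t, ht, hpeak⟩ := exists_eq_peak (hU.isSolution e).continuous hbump
      exact (hs.le_peak_left hk).not_gt
        (hpeak ▸ hW.lt_of_mem_bump hf (hU.isSolution e) hk hσ hτ ht)
    exact ((hU.isSolution e).neg_of_neg hf.eq_zero hσ hτ hbump hgap).le
  · exact (hU.isSolution e).nonpos_of_descending_zero hW.integrable hf.continuous hf.isBigO_id
      hf.eq_zero hs.apply_right hs.slope_right (hbump.trans hgap)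

theorem peak_right_le (hs : IsShootingSegment m σ τ large S M r U P k s₀ s₁)
    (hW : BumpWeight m σ τ δ I Λ W) (hf : ShootingBounds (σ (m + 1) - τ 0) δ I Λ M r C c f)
    (hU : IsShootingFlow W f (τ 0) (σ (m + 1)) U P) (hk : k < m) :
    peak (U s₁) (σ (k + 1)) (τ (k + 1)) ≤ r := by
  obtain ⟨t, ht, hpeak⟩ := exists_eq_peak (hU.isSolution s₁).continuous (hW.bump_lt k hk).le
  rw [← hpeak]
  exact ((hU.isSolution s₁).nonpos_of_descending_zero hW.integrable hf.continuous hf.isBigO_id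
    hf.eq_zero hs.apply_right hs.slope_right ht.1).trans hf.r_pos.le

-- The new segment runs from a solution whose peak on bump `k` is exactly `r`, which the next gap
-- throws above `M`, towards the endpoint lying on the prescribed side of `r`, and stops at the
-- first zero met at the start of bump `k + 1`.
theorem exists_succ (hs : IsShootingSegment m σ τ large S M r U P k s₀ s₁)
    (hW : BumpWeight m σ τ δ I Λ W) (hf : ShootingBounds (σ (m + 1) - τ 0) δ I Λ M r C c f)
    (hU : IsShootingFlow W f (τ 0) (σ (m + 1)) U P) (hk : k < m) :
    ∃ q z, IsShootingSegment m σ τ large S M r U P (k + 1) q z := by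
  have hr := hf.r_pos
  have hbump := (hW.bump_lt k hk).le
  have hgap := hW.gap_le (k + 1) hk
  obtain ⟨q, hq, e, he, hpeak, hside⟩ := exists_eq_and_endpoint
    (hU.continuous_peak hbump (hW.bump_subset hk)) (hf.r_le.trans (hs.le_peak_left hk))
    (hs.peak_right_le hW hf hU hk) (large k)
  have hqσ := hs.nonneg q hq
  have hqa : 0 ≤ U q (τ 0) := (hU.apply_left q).ge
  have hqp : 0 ≤ P q (τ 0) := (hs.slope_mem q hq).1.trans_eq (hU.slope_left q).symm
  have hmem : peak (U q) (σ (k + 1)) (τ (k + 1)) ∈ Icc (r / 2) r :=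
    ⟨by linarith, hpeak.le⟩
  have hquarter := hW.quarter_le_of_peak_mem hf (hU.isSolution q) hk hqa hqp hqσ hmem
    (right_mem_Icc.2 hgap)
  obtain ⟨z, hz, hUz, hnonneg⟩ := exists_eq_and_forall_uIcc_le (v := 0)
    (hU.continuous_apply (hW.gap_subset hk (right_mem_Icc.2 hgap))) (by linarith)
    (hs.nonpos_of_mem_endpoints hW hf hU hk e he)
  have he' : e ∈ uIcc s₀ s₁ := by
    rcases he with rfl | rfl
    exacts [left_mem_uIcc, right_mem_uIcc]
  have hsub : uIcc q z ⊆ uIcc s₀ s₁ := uIcc_subset_uIcc hq (uIcc_subset_uIcc hq he' hz)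
  refine ⟨q, z, fun s hsz ↦ hs.slope_mem s (hsub hsz), hnonneg, fun s hsz i hi ↦ ?_,
    fun hk' ↦ ?_, hUz, ?_⟩
  · rcases Nat.lt_succ_iff_lt_or_eq.1 hi with hlt | rfl
    · exact hs.itinerary s (hsub hsz) i hlt
    · exact hside s (uIcc_subset_uIcc_left hz hsz)
  · exact (hW.le_next_bump_of_peak_mem hf (hU.isSolution q) hk' hqa hqp hqσ hmem).trans
      (le_peak (hU.isSolution q).continuous (left_mem_Icc.2 (hW.bump_lt _ hk').le))
  · exact (hU.isSolution z).slope_nonpos_of_eq_zero hf.eq_zero (hU.apply_left z).ge hUz <|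
      (hW.left_le_σ hk.le).trans_lt ((hW.bump_lt k hk).trans_le hgap)

end IsShootingSegment

theorem BumpWeight.exists_isShootingSegment {m k : ℕ} {σ τ : ℕ → ℝ} {δ I Λ M r C c : ℝ}
    {W f : ℝ → ℝ} {U P : ℝ → ℝ → ℝ} (hW : BumpWeight m σ τ δ I Λ W)
    (hf : ShootingBounds (σ (m + 1) - τ 0) δ I Λ M r C c f)
    (hU : IsShootingFlow W f (τ 0) (σ (m + 1)) U P) (large : ℕ → Prop) (hk : k ≤ m) :
    ∃ s₀ s₁, IsShootingSegment m σ τ large (c * Λ) M r U P k s₀ s₁ := by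
  induction k with
  | zero => exact ⟨_, _, IsShootingSegment.zero hW hf hU⟩
  | succ k ih =>
    obtain ⟨s₀, s₁, hs⟩ := ih (by lia)
    exact hs.exists_succ hW hf hU hk

theorem BumpWeight.exists_followsItinerary_of_lipschitzWith {m : ℕ} {σ τ : ℕ → ℝ}
    {δ I Λ M r C c : ℝ} {W f : ℝ → ℝ} {K : NNReal} (hW : BumpWeight m σ τ δ I Λ W)
    (hf : ShootingBounds (σ (m + 1) - τ 0) δ I Λ M r C c f) (hLip : LipschitzWith K f)
    (large : ℕ → Prop) :
    ∃ u p, IsSolution W f u p ∧ u (τ 0) = 0 ∧ p (τ 0) ∈ Icc 0 (c * Λ) ∧ u (σ (m + 1)) = 0 ∧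
      (∀ t ∈ Icc (τ 0) (σ (m + 1)), u t ∈ Icc 0 M) ∧
      FollowsItinerary σ τ large (r / 2) r m u := by
  obtain ⟨U, P, hU⟩ := exists_isShootingFlow (hW.left_le_σ le_rfl) hW.integrable hW.eq_zero hLip
  obtain ⟨s₀, s, hs⟩ := hW.exists_isShootingSegment hf hU large le_rfl
  have hsol := hU.isSolution s
  have ha := hU.apply_left s
  have hmem := hs.slope_mem s right_mem_uIcc
  have hp := hU.slope_left s
  refine ⟨U s, P s, hsol, ha, hp.symm ▸ hmem, hs.apply_right,
    fun t ht ↦ hW.mem_Icc_of_boundary hf hsol ha hs.apply_right ht, fun i hi ↦ ?_⟩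
  obtain ⟨hlarge, hsmall⟩ := hs.itinerary s right_mem_uIcc i hi
  exact ⟨hlarge, fun hnot ↦ (hW.peak_lt_half hf hsol hi ha.ge (hmem.1.trans_eq hp.symm)
    hs.apply_right (hsmall hnot)).le⟩

/-! ### Passage to the limit -/

section Limit

theorem exists_subseq_tendstoUniformly {X Y : Type*} [TopologicalSpace X] [CompactSpace X]
    [MetricSpace Y] {K : Set Y} {w : ℕ → X → Y} (hw : Equicontinuous w) (hK : IsCompact K)
    (hwK : ∀ n x, w n x ∈ K) :
    ∃ v, Continuous v ∧ ∃ φ : ℕ → ℕ, StrictMono φ ∧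
      TendstoUniformly (fun n ↦ w (φ n)) v atTop := by
  let W (n : ℕ) : BoundedContinuousFunction X Y :=
    BoundedContinuousFunction.mkOfCompact ⟨w n, hw.continuous n⟩
  have hcompact : IsCompact (closure (range W)) := by
    refine BoundedContinuousFunction.arzela_ascoli K hK _ ?_ ?_
    · rintro _ x ⟨n, rfl⟩
      exact hwK n x
    · intro x U hU
      filter_upwards [hw x U hU] with y hy
      rintro ⟨_, n, rfl⟩
      exact hy n
  obtain ⟨v, -, φ, hφ, hv⟩ := hcompact.tendsto_subseq fun n ↦ subset_closure (mem_range_self n)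
  exact ⟨v, v.continuous, φ, hφ, BoundedContinuousFunction.tendsto_iff_tendstoUniformly.1 hv⟩

theorem exists_subseq_tendstoUniformlyOn_Icc {a b : ℝ} (hab : a ≤ b) {D : NNReal} {K : Set ℝ}
    {u : ℕ → ℝ → ℝ} (hu : ∀ n, LipschitzOnWith D (u n) (Icc a b)) (hK : IsCompact K)
    (huK : ∀ n, MapsTo (u n) (Icc a b) K) :
    ∃ v, Continuous v ∧ ∃ φ : ℕ → ℕ, StrictMono φ ∧
      TendstoUniformlyOn (fun n ↦ u (φ n)) v atTop (Icc a b) := by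
  have hequi : Equicontinuous fun n (t : Icc a b) ↦ u n t :=
    (LipschitzWith.uniformEquicontinuous _ D fun n ↦ (hu n).to_restrict).equicontinuous
  obtain ⟨v, hv, φ, hφ, hlim⟩ := exists_subseq_tendstoUniformly hequi hK
    fun n t ↦ huK n t.2
  refine ⟨IccExtend hab v, hv.Icc_extend', φ, hφ, ?_⟩
  rw [tendstoUniformlyOn_iff_tendstoUniformly_comp_coe]
  convert hlim using 1
  exact funext (IccExtend_val hab v)

variable {W f g u p v : ℝ → ℝ} {a b s C S t : ℝ}

theorem abs_picardSlope_le (hW : Integrable W) (hC : ∀ x ∈ uIcc a t, |f (v x)| ≤ C) :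
    |picardSlope W f a s v t| ≤ |s| + C * ∫ x, |W x| := by
  have hC0 : 0 ≤ C := (abs_nonneg _).trans (hC a left_mem_uIcc)
  exact (abs_sub _ _).trans (by gcongr; exact abs_intervalIntegral_mul_le hW hC0 hC)

theorem tendsto_picardSlope {ι : Type*} {l : Filter ι} [l.IsCountablyGenerated] {F v : ι → ℝ → ℝ}
    {σ : ι → ℝ} {v' : ℝ → ℝ} (hW : Integrable W) (hF : ∀ n, Continuous (F n))
    (hv : ∀ n, Continuous (v n)) (hC : ∀ n, ∀ x ∈ uIcc a t, |F n (v n x)| ≤ C)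
    (hσ : Tendsto σ l (𝓝 s))
    (hlim : ∀ x ∈ uIcc a t, Tendsto (fun n ↦ F n (v n x)) l (𝓝 (g (v' x)))) :
    Tendsto (fun n ↦ picardSlope W (F n) a (σ n) (v n) t) l (𝓝 (picardSlope W g a s v' t)) := by
  refine hσ.sub (intervalIntegral.tendsto_integral_filter_of_dominated_convergence
    (fun x ↦ C * |W x|) (Eventually.of_forall fun n ↦ ?_)
    (Eventually.of_forall fun n ↦ Eventually.of_forall fun x hx ↦ ?_)
    (hW.abs.const_mul C).intervalIntegrable (Eventually.of_forall fun x hx ↦ ?_))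
  · exact (hW.aestronglyMeasurable.mul ((hF n).comp (hv n)).aestronglyMeasurable).restrict
  · rw [Real.norm_eq_abs, abs_mul, mul_comm]
    gcongr
    exact hC n x (uIoc_subset_uIcc hx)
  · exact (hlim x (uIoc_subset_uIcc hx)).const_mul (W x)

theorem tendsto_picardStep {ι : Type*} {l : Filter ι} [l.IsCountablyGenerated] {F v : ι → ℝ → ℝ}
    {σ : ι → ℝ} {v' : ℝ → ℝ} (hW : Integrable W) (hF : ∀ n, Continuous (F n))
    (hv : ∀ n, Continuous (v n)) (hC : ∀ n, ∀ x ∈ uIcc a t, |F n (v n x)| ≤ C)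
    (hS : ∀ n, |σ n| ≤ S) (hσ : Tendsto σ l (𝓝 s))
    (hlim : ∀ x ∈ uIcc a t, Tendsto (fun n ↦ F n (v n x)) l (𝓝 (g (v' x)))) :
    Tendsto (fun n ↦ picardStep W (F n) a (σ n) (v n) t) l (𝓝 (picardStep W g a s v' t)) := by
  have hsub : ∀ x ∈ uIoc a t, uIcc a x ⊆ uIcc a t := fun x hx ↦
    uIcc_subset_uIcc_left (uIoc_subset_uIcc hx)
  refine intervalIntegral.tendsto_integral_filter_of_dominated_convergence
    (fun _ ↦ S + C * ∫ x, |W x|) (Eventually.of_forall fun n ↦ ?_)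
    (Eventually.of_forall fun n ↦ Eventually.of_forall fun x hx ↦ ?_)
    intervalIntegrable_const (Eventually.of_forall fun x hx ↦ ?_)
  · exact (continuous_picardSlope hW (hF n) (hv n) (σ n)).aestronglyMeasurable
  · exact (abs_picardSlope_le hW fun y hy ↦ hC n y (hsub x hx hy)).trans (by gcongr; exact hS n)
  · exact tendsto_picardSlope hW hF hv (fun n y hy ↦ hC n y (hsub x hx hy)) hσ
      fun y hy ↦ hlim y (hsub x hx hy)

theorem IsSolution.eq_picardSlope (hu : IsSolution W f u p) (a : ℝ) :
    p = picardSlope W f a (p a) u := by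
  ext t
  rw [picardSlope]
  linarith [hu.slope_sub a t]

theorem IsSolution.eq_picardStep (hu : IsSolution W f u p) (hW : Integrable W) (hf : Continuous f)
    (ha : u a = 0) : u = picardStep W f a (p a) u := by
  ext t
  rw [picardStep, ← hu.eq_picardSlope a, intervalIntegral.integral_eq_sub_of_hasDerivAt
    (fun x _ ↦ hu.hasDerivAt x) ((hu.continuous_slope hW hf).intervalIntegrable a t), ha, sub_zero]

theorem IsSolution.lipschitzOnWith (hu : IsSolution W f u p) (hW : Integrable W)
    (hS : |p a| ≤ S) (hC : ∀ t ∈ Icc a b, |f (u t)| ≤ C) :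
    LipschitzOnWith (S + C * ∫ x, |W x|).toNNReal u (Icc a b) := by
  refine (convex_Icc a b).lipschitzOnWith_of_nnnorm_hasDerivWithin_le
    (fun t _ ↦ (hu.hasDerivAt t).hasDerivWithinAt) fun t ht ↦ ?_
  rw [← NNReal.coe_le_coe, coe_nnnorm, Real.norm_eq_abs, hu.eq_picardSlope a]
  refine (abs_picardSlope_le hW fun x hx ↦ ?_).trans <| .trans (by gcongr) (Real.le_coe_toNNReal _)
  rw [uIcc_of_le ht.1] at hx
  exact hC x ⟨hx.1, hx.2.trans ht.2⟩

theorem exists_subseq_isSolution {F u p : ℕ → ℝ → ℝ} {K : Set ℝ} (hab : a ≤ b)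
    (hW : Integrable W) (hWout : ∀ t ∉ Icc a b, W t = 0) (hF : ∀ n, Continuous (F n))
    (hg : Continuous g)
    (hFg : ∀ x, Tendsto (fun q : ℕ × ℝ ↦ F q.1 q.2) (atTop ×ˢ 𝓝 x) (𝓝 (g x)))
    (hu : ∀ n, IsSolution W (F n) (u n) (p n)) (ha : ∀ n, u n a = 0) (hS : ∀ n, |p n a| ≤ S)
    (hC : ∀ n, ∀ t ∈ Icc a b, |F n (u n t)| ≤ C) (hK : IsCompact K)
    (huK : ∀ n, MapsTo (u n) (Icc a b) K) :
    ∃ v q, IsSolution W g v q ∧ ∃ φ : ℕ → ℕ, StrictMono φ ∧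
      TendstoUniformlyOn (fun n ↦ u (φ n)) v atTop (Icc a b) := by
  obtain ⟨v, hv, φ, hφ, hlim⟩ := exists_subseq_tendstoUniformlyOn_Icc hab
    (fun n ↦ (hu n).lipschitzOnWith hW (hS n) (hC n)) hK huK
  obtain ⟨s, -, ψ, hψ, hs⟩ := (isCompact_Icc (a := -S) (b := S)).tendsto_subseq
    (x := fun n ↦ p (φ n) a) fun n ↦ abs_le.1 (hS (φ n))
  have hlim : TendstoUniformlyOn (fun n ↦ u (φ (ψ n))) v atTop (Icc a b) :=
    fun U hU ↦ hψ.tendsto_atTop.eventually (hlim U hU)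
  have hnonlin : ∀ t ∈ Icc a b, Tendsto (fun n ↦ F (φ (ψ n)) (u (φ (ψ n)) t)) atTop
      (𝓝 (g (v t))) := fun t ht ↦
    (hFg (v t)).comp ((hφ.comp hψ).tendsto_atTop.prodMk (hlim.tendsto_at ht))
  have hfix : EqOn (picardStep W g a s v) v (Icc a b) := fun t ht ↦ by
    have hsub : uIcc a t ⊆ Icc a b := uIcc_of_le ht.1 ▸ Icc_subset_Icc_right ht.2
    refine tendsto_nhds_unique (tendsto_picardStep hW (fun n ↦ hF (φ (ψ n)))
      (fun n ↦ (hu (φ (ψ n))).continuous) (fun n x hx ↦ hC _ x (hsub hx)) (fun n ↦ hS _) hs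
      fun x hx ↦ hnonlin x (hsub hx)) ?_
    simpa only [← (hu _).eq_picardStep hW (hF _) (ha _)] using hlim.tendsto_at ht
  exact ⟨_, _, isSolution_of_eqOn_picardStep hW hg hv hWout hfix, φ ∘ ψ, hφ.comp hψ,
    hlim.congr_right hfix.symm⟩

theorem tendsto_peak {ι : Type*} {l : Filter ι} {u : ι → ℝ → ℝ} {v : ℝ → ℝ} {x y : ℝ}
    (hu : ∀ n, Continuous (u n)) (hv : Continuous v) (hxy : x ≤ y)
    (hlim : TendstoUniformlyOn u v l (Icc x y)) :
    Tendsto (fun n ↦ peak (u n) x y) l (𝓝 (peak v x y)) := by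
  refine Metric.tendsto_nhds.2 fun ε hε ↦ ?_
  filter_upwards [Metric.tendstoUniformlyOn_iff.1 hlim (ε / 2) (half_pos hε)] with n hn
  have hle := abs_peak_sub_peak_le (hu n) hv hxy fun t ht ↦
    (Real.dist_eq (u n t) (v t) ▸ dist_comm (v t) _ ▸ hn t ht).le
  exact hle.trans_lt (half_lt_self hε)

end Limit

theorem AlternatingNodes.followsItinerary_of_tendstoUniformlyOn {m : ℕ} {σ τ : ℕ → ℝ}
    {large : ℕ → Prop} {r₀ r₁ : ℝ} {u : ℕ → ℝ → ℝ} {v : ℝ → ℝ} (h : AlternatingNodes m σ τ)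
    (hu : ∀ n, Continuous (u n)) (hv : Continuous v)
    (hlim : TendstoUniformlyOn u v atTop (Icc (τ 0) (σ (m + 1))))
    (hfollows : ∀ n, FollowsItinerary σ τ large r₀ r₁ m (u n)) :
    FollowsItinerary σ τ large r₀ r₁ m v := fun i hi ↦
  have hpeak := tendsto_peak hu hv (h.bump_lt i hi).le (hlim.mono (h.bump_subset hi))
  ⟨fun hlarge ↦ ge_of_tendsto' hpeak fun n ↦ (hfollows n i hi).1 hlarge,
    fun hsmall ↦ le_of_tendsto' hpeak fun n ↦ (hfollows n i hi).2 hsmall⟩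

theorem BumpWeight.exists_followsItinerary {m : ℕ} {σ τ : ℕ → ℝ} {δ I Λ M r C c : ℝ}
    {W g : ℝ → ℝ} {F : ℕ → ℝ → ℝ} (hW : BumpWeight m σ τ δ I Λ W) (hg : Continuous g)
    (hF : ∀ n, ShootingBounds (σ (m + 1) - τ 0) δ I Λ M r C c (F n))
    (hLip : ∀ n, ∃ K, LipschitzWith K (F n))
    (hFg : ∀ x, Tendsto (fun q : ℕ × ℝ ↦ F q.1 q.2) (atTop ×ˢ 𝓝 x) (𝓝 (g x)))
    (large : ℕ → Prop) :
    ∃ u p, IsSolution W g u p ∧ u (τ 0) = 0 ∧ u (σ (m + 1)) = 0 ∧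
      (∀ t ∈ Icc (τ 0) (σ (m + 1)), 0 ≤ u t) ∧ FollowsItinerary σ τ large (r / 2) r m u := by
  have hab := hW.left_le_σ le_rfl
  choose K hK using hLip
  choose u p hu ha hp hb hmem hfollows using fun n ↦
    hW.exists_followsItinerary_of_lipschitzWith (hF n) (hK n) large
  obtain ⟨v, q, hv, φ, -, hlim⟩ := exists_subseq_isSolution (S := c * Λ) (C := C) hab hW.integrable
    hW.eq_zero (fun n ↦ (hF n).continuous) hg hFg hu ha
    (fun n ↦ (abs_of_nonneg (hp n).1).trans_le (hp n).2)
    (fun n t ht ↦ (abs_of_nonneg ((hF n).nonneg _)).trans_le ((hF n).le_of_le _ (hmem n t ht).2))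
    isCompact_Icc hmem
  have hzero : ∀ t ∈ Icc (τ 0) (σ (m + 1)), (∀ n, u n t = 0) → v t = 0 := fun t ht h ↦
    tendsto_nhds_unique (hlim.tendsto_at ht) (by simp only [h, tendsto_const_nhds_iff])
  exact ⟨v, q, hv, hzero _ (left_mem_Icc.2 hab) ha, hzero _ (right_mem_Icc.2 hab) hb,
    fun t ht ↦ ge_of_tendsto' (hlim.tendsto_at ht) fun n ↦ (hmem _ t ht).1,
    hW.followsItinerary_of_tendstoUniformlyOn (fun n ↦ (hu (φ n)).continuous) hv.continuous hlim
      fun n ↦ hfollows (φ n)⟩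

/-! ### Lipschitz minorants of the nonlinearity -/

/-- The largest `K`-Lipschitz minorant of a function `g` that is bounded below: the infimal
convolution of `g` with `K * dist`. -/
noncomputable def lipschitzMinorant {α : Type*} [PseudoMetricSpace α] (g : α → ℝ) (K : NNReal)
    (x : α) : ℝ :=
  ⨅ y, (g y + K * dist x y)

section lipschitzMinorant

variable {α : Type*} [PseudoMetricSpace α] {g : α → ℝ} {K : NNReal} {x : α}

theorem lipschitzMinorant_le_add (hg : ∀ y, 0 ≤ g y) (K : NNReal) (x y : α) :
    lipschitzMinorant g K x ≤ g y + K * dist x y :=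
  ciInf_le ⟨0, by rintro _ ⟨z, rfl⟩; have := hg z; positivity⟩ y

theorem lipschitzMinorant_le (hg : ∀ y, 0 ≤ g y) (K : NNReal) (x : α) :
    lipschitzMinorant g K x ≤ g x := by
  simpa using lipschitzMinorant_le_add hg K x x

theorem le_lipschitzMinorant {c : ℝ} (h : ∀ y, c ≤ g y + K * dist x y) :
    c ≤ lipschitzMinorant g K x :=
  haveI : Nonempty α := ⟨x⟩
  le_ciInf h

theorem lipschitzMinorant_nonneg (hg : ∀ y, 0 ≤ g y) (K : NNReal) (x : α) :
    0 ≤ lipschitzMinorant g K x :=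
  le_lipschitzMinorant fun y ↦ by have := hg y; positivity

theorem lipschitzMinorant_eq_zero (hg : ∀ y, 0 ≤ g y) (hx : g x = 0) (K : NNReal) :
    lipschitzMinorant g K x = 0 :=
  le_antisymm ((lipschitzMinorant_le hg K x).trans hx.le) (lipschitzMinorant_nonneg hg K x)

theorem lipschitzWith_lipschitzMinorant (hg : ∀ y, 0 ≤ g y) (K : NNReal) :
    LipschitzWith K (lipschitzMinorant g K) := by
  refine LipschitzWith.of_le_add_mul K fun x y ↦ ?_
  rw [← sub_le_iff_le_add]
  refine le_lipschitzMinorant fun z ↦ ?_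
  have htri : K * dist x z ≤ K * (dist x y + dist y z) :=
    mul_le_mul_of_nonneg_left (dist_triangle x y z) K.2
  linarith [lipschitzMinorant_le_add hg K x z]

theorem le_lipschitzMinorant_of_forall_dist_lt (hg : ∀ y, 0 ≤ g y) {c d : ℝ}
    (hnear : ∀ y, dist x y < d → c ≤ g y) (hfar : c ≤ K * d) : c ≤ lipschitzMinorant g K x := by
  refine le_lipschitzMinorant fun y ↦ ?_
  rcases lt_or_ge (dist x y) d with hy | hy
  · exact (hnear y hy).trans (le_add_of_nonneg_right (by positivity))
  · exact hfar.trans <| (mul_le_mul_of_nonneg_left hy K.2).trans (le_add_of_nonneg_left (hg y))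

theorem tendsto_lipschitzMinorant {ι : Type*} {l : Filter ι} {k : ι → NNReal}
    (hg : ∀ y, 0 ≤ g y) (hx : ContinuousAt g x) (hk : Tendsto k l atTop) :
    Tendsto (fun q : ι × α ↦ lipschitzMinorant g (k q.1) q.2) (l ×ˢ 𝓝 x) (𝓝 (g x)) := by
  refine tendsto_order.2 ⟨fun c hc ↦ ?_, fun c hc ↦ ?_⟩
  · obtain ⟨c', hcc', hc'⟩ := exists_between hc
    obtain ⟨η, hη, hball⟩ := Metric.eventually_nhds_iff.1 (hx.eventually (lt_mem_nhds hc'))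
    have hlarge : ∀ᶠ i in l, c' ≤ k i * (η / 2) :=
      (NNReal.tendsto_coe_atTop.2 hk).atTop_mul_const (half_pos hη) |>.eventually_ge_atTop c'
    filter_upwards [hlarge.prod_mk (Metric.ball_mem_nhds x (half_pos hη))]
    rintro ⟨i, z⟩ ⟨hi, hz⟩
    refine hcc'.trans_le (le_lipschitzMinorant_of_forall_dist_lt hg (fun y hy ↦ ?_) hi)
    refine (hball ?_).le
    linarith [dist_triangle_left y x z, Metric.mem_ball.1 hz]
  · filter_upwards [tendsto_snd.eventually (hx.eventually (gt_mem_nhds hc))] with q hq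
    exact (lipschitzMinorant_le hg (k q.1) q.2).trans_lt hq

end lipschitzMinorant

theorem isBigO_id_lipschitzMinorant {g : ℝ → ℝ} (hg : ∀ y, 0 ≤ g y) (hg₀ : g 0 = 0)
    (K : NNReal) : lipschitzMinorant g K =O[𝓝 0] (id : ℝ → ℝ) := by
  refine Asymptotics.IsBigO.of_bound K (Eventually.of_forall fun x ↦ ?_)
  rw [Real.norm_of_nonneg (lipschitzMinorant_nonneg hg K x)]
  simpa [hg₀] using lipschitzMinorant_le_add hg K x 0

theorem eventually_forall_ge_le_lipschitzMinorant {g : ℝ → ℝ} (hg : ∀ y, 0 ≤ g y) {c ρ : ℝ}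
    (hρ : 0 < ρ) (hc : ∀ y ≥ ρ / 2, c ≤ g y) :
    ∀ᶠ K in atTop, ∀ v ≥ ρ, c ≤ lipschitzMinorant g K v := by
  filter_upwards [(NNReal.tendsto_coe_atTop.2 tendsto_id).atTop_mul_const (half_pos hρ)
    |>.eventually_ge_atTop c] with K hK v hv
  refine le_lipschitzMinorant_of_forall_dist_lt hg (fun y hy ↦ hc y ?_) hK
  linarith [le_abs_self (v - y), Real.dist_eq v y]

theorem eventually_forall_ge_mul_le_lipschitzMinorant {g : ℝ → ℝ} (hg : ∀ y, 0 ≤ g y)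
    {A Y : ℝ} (hA : 0 ≤ A) (hY : 0 < Y) (hAg : ∀ y ≥ Y / 2, 2 * A * y ≤ g y) :
    ∀ᶠ K in atTop, ∀ v ≥ Y, A * v ≤ lipschitzMinorant g K v := by
  filter_upwards [(NNReal.tendsto_coe_atTop.2 tendsto_id).eventually_ge_atTop (2 * A)]
    with K hK v hv
  have hv₀ : 0 ≤ v / 2 := by linarith
  refine le_lipschitzMinorant_of_forall_dist_lt hg (d := v / 2) (fun y hy ↦ ?_) ?_
  · have hvy : v / 2 ≤ y := by linarith [le_abs_self (v - y), Real.dist_eq v y]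
    calc A * v = 2 * A * (v / 2) := by ring
      _ ≤ 2 * A * y := mul_le_mul_of_nonneg_left hvy (by positivity)
      _ ≤ g y := hAg y (by linarith)
  · calc A * v = 2 * A * (v / 2) := by ring
      _ ≤ K * (v / 2) := mul_le_mul_of_nonneg_right hK hv₀

/-- A continuous nonlinearity satisfying the conditions `(g₊)`, `(g₀)` and `(g_∞)`, extended by
zero to the nonpositive half-line. -/
structure SuperlinearNonlinearity (g : ℝ → ℝ) : Prop where
  continuous : Continuous g
  pos : ∀ s > 0, 0 < g s
  eq_zero : ∀ s ≤ 0, g s = 0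
  tendsto_zero : Tendsto (fun s ↦ g s / s) (𝓝[>] 0) (𝓝 0)
  tendsto_atTop : Tendsto (fun s ↦ g s / s) atTop atTop

namespace SuperlinearNonlinearity

variable {g : ℝ → ℝ} {L δ I : ℝ}

theorem nonneg (hg : SuperlinearNonlinearity g) (s : ℝ) : 0 ≤ g s := by
  rcases le_or_gt s 0 with hs | hs
  · exact (hg.eq_zero s hs).ge
  · exact (hg.pos s hs).le

theorem exists_forall_le_mul_max (hg : SuperlinearNonlinearity g) {η : ℝ} (hη : 0 < η) :
    ∃ r > 0, ∀ s ≤ r, g s ≤ η * max s 0 := by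
  obtain ⟨r, hr, hsub⟩ :=
    mem_nhdsGT_iff_exists_Ioc_subset.1 (hg.tendsto_zero.eventually (gt_mem_nhds hη))
  refine ⟨r, hr, fun s hs ↦ ?_⟩
  rcases le_or_gt s 0 with hs₀ | hs₀
  · rw [hg.eq_zero s hs₀]
    positivity
  · rw [max_eq_left hs₀.le]
    exact ((div_lt_iff₀ hs₀).1 (hsub ⟨hs₀, hs⟩)).le

theorem isBigO_id (hg : SuperlinearNonlinearity g) : g =O[𝓝 0] (id : ℝ → ℝ) := by
  obtain ⟨r, hr, hgr⟩ := hg.exists_forall_le_mul_max one_pos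
  refine Asymptotics.IsBigO.of_bound 1 ?_
  filter_upwards [Iic_mem_nhds hr] with s hs
  rw [Real.norm_of_nonneg (hg.nonneg s)]
  refine (hgr s hs).trans (mul_le_mul_of_nonneg_left ?_ zero_le_one)
  exact max_le (le_abs_self s) (abs_nonneg s)

theorem exists_forall_mul_le (hg : SuperlinearNonlinearity g) (A : ℝ) :
    ∃ Y > 0, ∀ s ≥ Y, A * s ≤ g s := by
  obtain ⟨Y, hY⟩ := eventually_atTop.1
    ((hg.tendsto_atTop.eventually_ge_atTop A).and (eventually_gt_atTop 0))
  exact ⟨Y, (hY Y le_rfl).2, fun s hs ↦ (le_div_iff₀ (hY s hs).2).1 (hY s hs).1⟩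

theorem exists_forall_le (hg : SuperlinearNonlinearity g) (M : ℝ) : ∃ C ≥ 0, ∀ s ≤ M, g s ≤ C := by
  obtain ⟨C, hC⟩ := (isCompact_Icc (a := 0) (b := M)).bddAbove_image hg.continuous.continuousOn
  refine ⟨max C 0, le_max_right _ _, fun s hs ↦ ?_⟩
  rcases le_or_gt s 0 with hs₀ | hs₀
  · exact (hg.eq_zero s hs₀).le.trans (le_max_right _ _)
  · exact (hC (mem_image_of_mem g ⟨hs₀.le, hs⟩)).trans (le_max_left _ _)

theorem tendsto (hg : SuperlinearNonlinearity g) : Tendsto g atTop atTop := by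
  refine (hg.tendsto_atTop.atTop_mul_atTop₀ tendsto_id).congr' ?_
  filter_upwards [eventually_ne_atTop 0] with s hs
  exact div_mul_cancel₀ (g s) hs

theorem exists_forall_ge_le (hg : SuperlinearNonlinearity g) {ρ : ℝ} (hρ : 0 < ρ) :
    ∃ c > 0, ∀ s ≥ ρ, c ≤ g s := by
  have htail : ∀ᶠ s in cocompact ℝ ⊓ 𝓟 (Ici ρ), g ρ ≤ g s := by
    rw [cocompact_eq_atBot_atTop, eventually_inf_principal, eventually_sup]
    refine ⟨?_, (hg.tendsto.eventually_ge_atTop (g ρ)).mono fun s hs _ ↦ hs⟩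
    filter_upwards [eventually_lt_atBot ρ] with s hs hsρ
    exact absurd hsρ hs.not_ge
  obtain ⟨s₀, hs₀, hmin⟩ :=
    hg.continuous.continuousOn.exists_isMinOn' isClosed_Ici self_mem_Ici htail
  exact ⟨g s₀, hg.pos s₀ (hρ.trans_le hs₀), fun s hs ↦ hmin hs⟩

theorem exists_eventually_superlinear (hg : SuperlinearNonlinearity g) (hL : 0 < L)
    (hδ : 0 < δ) :
    ∃ M > 0, ∀ᶠ K in atTop, ∀ v ≥ M * δ / L,
      3 * L * v ≤ δ * δ ^ 2 * lipschitzMinorant g K v := by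
  obtain ⟨Y, hY, hgY⟩ := hg.exists_forall_mul_le (2 * (3 * L / (δ * δ ^ 2)))
  refine ⟨2 * Y * L / δ, by positivity, ?_⟩
  have hcancel : 2 * Y * L / δ * δ / L = 2 * Y := by field_simp
  filter_upwards [eventually_forall_ge_mul_le_lipschitzMinorant hg.nonneg
    (A := 3 * L / (δ * δ ^ 2)) (Y := 2 * Y) (by positivity) (by positivity)
    fun y hy ↦ hgY y (by linarith)] with K hK v hv
  have hle := hK v (hcancel ▸ hv)
  rwa [div_mul_eq_mul_div, div_le_iff₀' (by positivity)] at hle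

theorem exists_forall_sublinear (hg : SuperlinearNonlinearity g) {M : ℝ} (hL : 0 < L)
    (hI : 0 < I) (hM : 0 < M) :
    ∃ r > 0, r ≤ M ∧ ∀ v ≤ r, g v ≤ r / (8 * L * I) := by
  obtain ⟨r, hr, hgr⟩ := hg.exists_forall_le_mul_max (η := 1 / (8 * L * I)) (by positivity)
  have hmin : 0 < min r M := lt_min hr hM
  refine ⟨min r M, hmin, min_le_right _ _, fun v hv ↦ ?_⟩
  calc g v ≤ 1 / (8 * L * I) * max v 0 := hgr v (hv.trans (min_le_left _ _))
    _ ≤ 1 / (8 * L * I) * min r M :=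
      mul_le_mul_of_nonneg_left (max_le hv hmin.le) (by positivity)
    _ = min r M / (8 * L * I) := by ring

theorem exists_shootingBounds (hg : SuperlinearNonlinearity g) (hL : 0 < L) (hδ : 0 < δ)
    (hI : 0 < I) :
    ∃ M r C c Λ₀ : ℝ, 0 < r ∧ 0 < Λ₀ ∧ ∀ Λ ≥ Λ₀, ∀ᶠ K in atTop,
      ShootingBounds L δ I Λ M r C c (lipschitzMinorant g K) := by
  obtain ⟨M, hM, hsuper⟩ := hg.exists_eventually_superlinear hL hδ
  obtain ⟨r, hr, hrM, hsub⟩ := hg.exists_forall_sublinear hL hI hM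
  obtain ⟨C, hC, hgC⟩ := hg.exists_forall_le M
  have hρ : 0 < r / (8 * L) * δ := by positivity
  obtain ⟨c, hc, hgc⟩ := hg.exists_forall_ge_le (half_pos hρ)
  refine ⟨M, r, C, c, (M / δ + C * I) / c, hr, by positivity, fun Λ hΛ ↦ ?_⟩
  filter_upwards [hsuper, eventually_forall_ge_le_lipschitzMinorant hg.nonneg hρ hgc]
    with K hsuperK hcK
  exact
    { continuous := (lipschitzWith_lipschitzMinorant hg.nonneg K).continuous
      nonneg := lipschitzMinorant_nonneg hg.nonneg K
      eq_zero := fun v hv ↦ lipschitzMinorant_eq_zero hg.nonneg (hg.eq_zero v hv) K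
      isBigO_id := isBigO_id_lipschitzMinorant hg.nonneg (hg.eq_zero 0 le_rfl) K
      mass_pos := hI
      r_pos := hr
      r_le := hrM
      c_pos := hc
      le_of_le := fun v hv ↦ (lipschitzMinorant_le hg.nonneg K v).trans (hgC v hv)
      superlinear := hsuperK
      sublinear := fun v hv ↦ (lipschitzMinorant_le hg.nonneg K v).trans (hsub v hv)
      le_of_ge := hcK
      barrier := (div_le_iff₀' hc).1 hΛ }

end SuperlinearNonlinearity

/-! ### The weight -/

/-- The condition `(h*)` on the weight `h`; on the outer gaps only the sign of `h` is prescribed. -/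
structure AlternatingWeight (m : ℕ) (σ τ : ℕ → ℝ) (h : ℝ → ℝ) : Prop
    extends AlternatingNodes m σ τ where
  integrableOn : IntegrableOn h (Icc (τ 0) (σ (m + 1)))
  gap_lt : ∀ i, i + 1 < m → τ (i + 1) < σ (i + 2)
  nonneg_bump : ∀ i < m, ∀ᵐ t ∂volume.restrict (Icc (σ (i + 1)) (τ (i + 1))), 0 ≤ h t
  nonpos_gap : ∀ i ≤ m, ∀ᵐ t ∂volume.restrict (Icc (τ i) (σ (i + 1))), h t ≤ 0
  ne_zero_bump : ∀ i < m, ¬ ∀ᵐ t ∂volume.restrict (Icc (σ (i + 1)) (τ (i + 1))), h t = 0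
  ne_zero_gap : ∀ i, i + 1 < m →
    ¬ ∀ᵐ t ∂volume.restrict (Icc (τ (i + 1)) (σ (i + 2))), h t = 0

/-- The weight `h⁺ - μ h⁻` of the problem `(D_μ)`, extended by zero outside `[a, b]`. -/
noncomputable def dirichletWeight (a b : ℝ) (h : ℝ → ℝ) (μ : ℝ) : ℝ → ℝ :=
  (Icc a b).indicator fun t ↦ posW h t - μ * negW h t

theorem dirichletWeight_of_mem {a b t : ℝ} (ht : t ∈ Icc a b) (h : ℝ → ℝ) (μ : ℝ) :
    dirichletWeight a b h μ t = posW h t - μ * negW h t :=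
  indicator_of_mem ht _

theorem integrable_dirichletWeight {a b : ℝ} {h : ℝ → ℝ} (hh : IntegrableOn h (Icc a b))
    (μ : ℝ) : Integrable (dirichletWeight a b h μ) :=
  (integrable_indicator_iff measurableSet_Icc).2 <|
    ((hh.abs.div_const 2).add (hh.div_const 2)).sub
      (((hh.abs.div_const 2).sub (hh.div_const 2)).const_mul μ)

section dirichletWeight

variable {a b x y : ℝ} {h : ℝ → ℝ}

theorem dirichletWeight_ae_eq_abs (hxy : Icc x y ⊆ Icc a b)
    (hh : ∀ᵐ t ∂volume.restrict (Icc x y), 0 ≤ h t) (μ : ℝ) :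
    dirichletWeight a b h μ =ᵐ[volume.restrict (Icc x y)] fun t ↦ |h t| := by
  filter_upwards [hh, ae_restrict_mem measurableSet_Icc] with t ht htxy
  rw [dirichletWeight_of_mem (hxy htxy), posW, negW, abs_of_nonneg ht]
  ring

theorem dirichletWeight_ae_eq_neg_mul_abs (hxy : Icc x y ⊆ Icc a b)
    (hh : ∀ᵐ t ∂volume.restrict (Icc x y), h t ≤ 0) (μ : ℝ) :
    dirichletWeight a b h μ =ᵐ[volume.restrict (Icc x y)] fun t ↦ -μ * |h t| := by
  filter_upwards [hh, ae_restrict_mem measurableSet_Icc] with t ht htxy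
  rw [dirichletWeight_of_mem (hxy htxy), posW, negW, abs_of_nonpos ht]
  ring

end dirichletWeight

namespace AlternatingWeight

variable {m : ℕ} {σ τ : ℕ → ℝ} {h : ℝ → ℝ}

theorem exists_margin (hh : AlternatingWeight m σ τ h) :
    ∃ δ > 0,
      (∀ i < m, 2 * δ ≤ τ (i + 1) - σ (i + 1) ∧
        δ ≤ ∫ t in (σ (i + 1) + δ)..(τ (i + 1) - δ), |h t|) ∧
      ∀ i, i + 1 < m → δ ≤ σ (i + 2) - τ (i + 1) ∧
        δ ≤ ∫ t in (τ (i + 1))..(σ (i + 2) - δ), |h t| := by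
  have hbump : ∀ i ∈ Finset.range m, ∀ᶠ δ in 𝓝[>] (0 : ℝ), 2 * δ ≤ τ (i + 1) - σ (i + 1) ∧
      δ ≤ ∫ t in (σ (i + 1) + δ)..(τ (i + 1) - δ), |h t| := fun i hi ↦ by
    have him : i < m := Finset.mem_range.1 hi
    have hint := hh.integrableOn.mono_set (hh.bump_subset him)
    simpa [one_add_one_eq_two] using
      eventually_le_intervalIntegral_shrink (hh.bump_lt i him) zero_le_one hint.abs
        (intervalIntegral_abs_pos (hh.bump_lt i him).le hint (hh.ne_zero_bump i him))
  have hgap : ∀ i ∈ Finset.range (m - 1), ∀ᶠ δ in 𝓝[>] (0 : ℝ), δ ≤ σ (i + 2) - τ (i + 1) ∧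
      δ ≤ ∫ t in (τ (i + 1))..(σ (i + 2) - δ), |h t| := fun i hi ↦ by
    have him : i + 1 < m := by have := Finset.mem_range.1 hi; lia
    have hint := hh.integrableOn.mono_set (hh.gap_subset him.le)
    simpa using
      eventually_le_intervalIntegral_shrink (hh.gap_lt i him) le_rfl hint.abs
        (intervalIntegral_abs_pos (hh.gap_lt i him).le hint (hh.ne_zero_gap i him))
  obtain ⟨δ, ⟨hδbump, hδgap⟩, hδ⟩ := (((eventually_all_finset _).2 hbump).and
    ((eventually_all_finset _).2 hgap)).and self_mem_nhdsWithin |>.exists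
  exact ⟨δ, hδ, fun i hi ↦ hδbump i (Finset.mem_range.2 hi),
    fun i hi ↦ hδgap i (Finset.mem_range.2 (by lia))⟩

theorem intervalIntegral_bump_le (hh : AlternatingWeight m σ τ h) {i : ℕ} (hi : i < m) :
    ∫ t in (σ (i + 1))..(τ (i + 1)), |h t| ≤ ∫ t in Icc (τ 0) (σ (m + 1)), |h t| := by
  rw [intervalIntegral.integral_of_le (hh.bump_lt i hi).le]
  exact setIntegral_mono_set hh.integrableOn.abs (Eventually.of_forall fun t ↦ abs_nonneg (h t))
    (Ioc_subset_Icc_self.trans (hh.bump_subset hi)).eventuallyLE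

theorem exists_bumpWeight (hh : AlternatingWeight m σ τ h) :
    ∃ δ > 0, ∃ I > 0, ∀ μ ≥ 0,
      BumpWeight m σ τ δ I (μ * δ) (dirichletWeight (τ 0) (σ (m + 1)) h μ) := by
  obtain ⟨δ, hδ, hbump, hgap⟩ := hh.exists_margin
  have : 0 ≤ ∫ t in Icc (τ 0) (σ (m + 1)), |h t| := integral_nonneg fun t ↦ abs_nonneg (h t)
  refine ⟨δ, hδ, (∫ t in Icc (τ 0) (σ (m + 1)), |h t|) + 1, by positivity, fun μ hμ ↦ ?_⟩
  have hW_bump := fun i hi ↦ dirichletWeight_ae_eq_abs (hh.bump_subset hi) (hh.nonneg_bump i hi) μ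
  have hW_gap := fun i hi ↦
    dirichletWeight_ae_eq_neg_mul_abs (hh.gap_subset hi) (hh.nonpos_gap i hi) μ
  exact
    { toAlternatingNodes := hh.toAlternatingNodes
      integrable := integrable_dirichletWeight hh.integrableOn μ
      eq_zero := fun t ht ↦ indicator_of_notMem ht _
      margin_pos := hδ
      margin_bump := fun i hi ↦ (hbump i hi).1
      margin_gap := fun i hi ↦ (hgap i hi).1
      nonneg_bump := fun i hi ↦ (hW_bump i hi).mono fun t ht ↦ ht ▸ abs_nonneg (h t)
      nonpos_gap := fun i hi ↦ (hW_gap i hi).mono fun t ht ↦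
        ht ▸ mul_nonpos_of_nonpos_of_nonneg (neg_nonpos.2 hμ) (abs_nonneg (h t))
      core_mass := fun i hi ↦ by
        rw [intervalIntegral_congr_of_ae_restrict_Icc (hW_bump i hi) (by linarith)
          (by linarith [hbump i hi]) (by linarith)]
        exact (hbump i hi).2
      bump_mass := fun i hi ↦ by
        rw [intervalIntegral_congr_of_ae_restrict_Icc (hW_bump i hi) le_rfl
          (hh.bump_lt i hi).le le_rfl]
        linarith [hh.intervalIntegral_bump_le hi]
      gap_mass := fun i hi ↦ by
        rw [intervalIntegral_congr_of_ae_restrict_Icc (hW_gap (i + 1) hi.le) le_rfl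
          (by linarith [hgap i hi]) (by linarith), intervalIntegral.integral_const_mul, neg_mul]
        exact neg_le_neg (mul_le_mul_of_nonneg_left (hgap i hi).2 hμ) }

end AlternatingWeight

theorem FollowsItinerary.subset_of_eqOn {σ τ : ℕ → ℝ} {S T : Finset ℕ} {r₀ r₁ : ℝ} {k : ℕ}
    {u v : ℝ → ℝ} (hu : FollowsItinerary σ τ (· ∈ S) r₀ r₁ k u)
    (hv : FollowsItinerary σ τ (· ∈ T) r₀ r₁ k v) (hr : r₀ < r₁) (hS : S ⊆ Finset.range k)
    (huv : ∀ i < k, EqOn u v (Icc (σ (i + 1)) (τ (i + 1)))) : S ⊆ T := by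
  intro i hi
  have hik : i < k := Finset.mem_range.1 (hS hi)
  by_contra hiT
  have hpeak : peak u (σ (i + 1)) (τ (i + 1)) = peak v (σ (i + 1)) (τ (i + 1)) :=
    congrArg sSup (huv i hik).image_eq
  linarith [(hu i hik).1 hi, (hv i hik).2 hiT]

theorem exists_injective_nonempty_subset_range (m : ℕ) :
    ∃ S : Fin (2 ^ m - 1) → Finset ℕ,
      Function.Injective S ∧ ∀ j, (S j).Nonempty ∧ S j ⊆ Finset.range m := by
  have hcard : ((Finset.range m).powerset.erase ∅).card = 2 ^ m - 1 := by
    rw [Finset.card_erase_of_mem (Finset.empty_mem_powerset _), Finset.card_powerset,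
      Finset.card_range]
  let e := (Finset.equivFinOfCardEq hcard).symm
  refine ⟨fun j ↦ e j, Subtype.val_injective.comp e.injective, fun j ↦ ?_⟩
  obtain ⟨hne, hsub⟩ := Finset.mem_erase.1 (e j).2
  exact ⟨Finset.nonempty_iff_ne_empty.2 hne, Finset.mem_powerset.1 hsub⟩

namespace IsSolution

variable {W g u p : ℝ → ℝ} {a b : ℝ}

theorem pos_of_nonneg (hu : IsSolution W g u p) (hW : Integrable W) (hg : Continuous g)
    (hg₀ : g =O[𝓝 0] (id : ℝ → ℝ)) (hnonneg : ∀ t ∈ Icc a b, 0 ≤ u t) {s : ℝ} (hs : u s ≠ 0)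
    {t : ℝ} (ht : t ∈ Ioo a b) : 0 < u t := by
  refine (hnonneg t (Ioo_subset_Icc_self ht)).lt_of_ne' fun hzero ↦ hs ?_
  have hmin : IsLocalMin u t := by
    filter_upwards [Icc_mem_nhds ht.1 ht.2] with x hx
    exact hzero ▸ hnonneg x hx
  exact hu.eq_zero hW hg hg₀ hzero (hmin.hasDerivAt_eq_zero (hu.hasDerivAt t)) s

theorem isCaraSol {h : ℝ → ℝ} {μ : ℝ} (hu : IsSolution (dirichletWeight a b h μ) g u p)
    (hab : a ≤ b) (hh : IntegrableOn h (Icc a b)) (hg : Continuous g) :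
    IsCaraSol a b (fun s x ↦ (posW h s - μ * negW h s) * g x) u p := by
  have heq : ∀ x ∈ Icc a b,
      dirichletWeight a b h μ x * g (u x) = (posW h x - μ * negW h x) * g (u x) := fun x hx ↦ by
    rw [dirichletWeight_of_mem hx]
  refine ⟨fun t _ ↦ hu.hasDerivAt t, ?_, fun t ht ↦ ?_⟩
  · have hint := intervalIntegrable_mul_comp (integrable_dirichletWeight hh μ) hg hu.continuous a b
    refine hint.congr fun x hx ↦ heq x ?_
    exact Ioc_subset_Icc_self (uIoc_of_le hab ▸ hx)
  · rw [← intervalIntegral.integral_congr fun x hx ↦ heq x ?_]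
    · linarith [hu.slope_sub a t]
    · exact Icc_subset_Icc_right ht.2 (uIcc_of_le ht.1 ▸ hx)

end IsSolution

namespace AlternatingWeight

variable {m : ℕ} {σ τ : ℕ → ℝ} {g h : ℝ → ℝ}

theorem exists_solution_followsItinerary (hh : AlternatingWeight m σ τ h)
    (hg : SuperlinearNonlinearity g) (hab : τ 0 < σ (m + 1)) :
    ∃ μstar > (0 : ℝ), ∃ r > (0 : ℝ), ∀ μ > μstar, ∀ large : ℕ → Prop, ∃ u p,
      IsSolution (dirichletWeight (τ 0) (σ (m + 1)) h μ) g u p ∧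
        u (τ 0) = 0 ∧ u (σ (m + 1)) = 0 ∧ (∀ t ∈ Icc (τ 0) (σ (m + 1)), 0 ≤ u t) ∧
          FollowsItinerary σ τ large (r / 2) r m u := by
  obtain ⟨δ, hδ, I, hI, hbump⟩ := hh.exists_bumpWeight
  obtain ⟨M, r, C, c, Λ₀, hr, hΛ₀, hbounds⟩ := hg.exists_shootingBounds (sub_pos.2 hab) hδ hI
  have hμstar : 0 < Λ₀ / δ := by positivity
  refine ⟨Λ₀ / δ, hμstar, r, hr, fun μ hμ large ↦ ?_⟩
  obtain ⟨K₀, hK₀⟩ := eventually_atTop.1 (hbounds (μ * δ) ((div_lt_iff₀ hδ).1 hμ).le)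
  let K (n : ℕ) : NNReal := K₀ + n
  have hK : Tendsto K atTop atTop :=
    tendsto_atTop_mono (fun n ↦ le_add_self) (tendsto_natCast_atTop_atTop (R := NNReal))
  exact (hbump μ (hμstar.trans hμ).le).exists_followsItinerary hg.continuous
    (F := fun n ↦ lipschitzMinorant g (K n)) (fun n ↦ hK₀ (K n) le_self_add)
    (fun n ↦ ⟨K n, lipschitzWith_lipschitzMinorant hg.nonneg (K n)⟩)
    (fun x ↦ tendsto_lipschitzMinorant hg.nonneg hg.continuous.continuousAt hK) large

theorem exists_positive_solution_followsItinerary (hh : AlternatingWeight m σ τ h)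
    (hg : SuperlinearNonlinearity g) (hab : τ 0 < σ (m + 1)) :
    ∃ μstar > (0 : ℝ), ∃ r > (0 : ℝ), ∀ μ > μstar,
      ∀ S : Finset ℕ, S.Nonempty → S ⊆ Finset.range m → ∃ u p,
        IsCaraSol (τ 0) (σ (m + 1)) (fun s x ↦ (posW h s - μ * negW h s) * g x) u p ∧
          u (τ 0) = 0 ∧ u (σ (m + 1)) = 0 ∧ (∀ t ∈ Ioo (τ 0) (σ (m + 1)), 0 < u t) ∧
            FollowsItinerary σ τ (· ∈ S) (r / 2) r m u := by
  obtain ⟨μstar, hμstar, r, hr, hsol⟩ := hh.exists_solution_followsItinerary hg hab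
  refine ⟨μstar, hμstar, r, hr, fun μ hμ S ⟨i, hiS⟩ hSm ↦ ?_⟩
  obtain ⟨u, p, hu, hleft, hright, hnonneg, hitin⟩ := hsol μ hμ (· ∈ S)
  have him : i < m := Finset.mem_range.1 (hSm hiS)
  obtain ⟨s, -, hs⟩ := exists_eq_peak hu.continuous (hh.bump_lt i him).le
  have hus : u s ≠ 0 := (hr.trans_le (((hitin i him).1 hiS).trans_eq hs.symm)).ne'
  exact ⟨u, p, hu.isCaraSol hab.le hh.integrableOn hg.continuous, hleft, hright,
    fun t ht ↦ hu.pos_of_nonneg (integrable_dirichletWeight hh.integrableOn μ) hg.continuous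
      hg.isBigO_id hnonneg hus ht, hitin⟩

end AlternatingWeight

/-- **Feltrin–Zanolin multiplicity theorem.** Under `(g₊)`, `(g₀)`,
`(g_∞)` and `(h*)` with `m` positivity intervals, there exists `μ* > 0` such that
for `μ > μ*` the Dirichlet problem `u'' + (h⁺ - μ h⁻) g(u) = 0`, `u(a) = 0 = u(b)`,
has at least `2^m - 1` positive solutions. -/
theorem feltrin_zanolin_multiplicity
    (a b : ℝ) (hab : a < b)
    (g : ℝ → ℝ)
    (hg_cont : Continuous g)
    (hg0 : g 0 = 0)
    (hg_pos : ∀ s > 0, 0 < g s)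
    (hg_ext : ∀ s ≤ (0 : ℝ), g s = 0)
    (hg_zero : Tendsto (fun s => g s / s) (nhdsWithin 0 (Set.Ioi 0)) (nhds 0))
    (hg_infty : Tendsto (fun s => g s / s) atTop atTop)
    (h : ℝ → ℝ)
    (hh_int : IntegrableOn h (Set.Icc a b))
    (m : ℕ) (hm : 1 ≤ m)
    (σ τ : ℕ → ℝ)
    (hτ0 : τ 0 = a) (hσlast : σ (m + 1) = b)
    (h0 : τ 0 ≤ σ 1) (hlast : τ m ≤ σ (m + 1))
    (hστ : ∀ i, 1 ≤ i → i ≤ m → σ i < τ i)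
    (hτσ : ∀ i, 1 ≤ i → i < m → τ i < σ (i + 1))
    (hpos : ∀ i, 1 ≤ i → i ≤ m →
      (∀ᵐ t ∂(volume.restrict (Set.Icc (σ i) (τ i))), 0 ≤ h t) ∧
      ¬ (∀ᵐ t ∂(volume.restrict (Set.Icc (σ i) (τ i))), h t = 0))
    (hneg : ∀ i, i ≤ m →
      (∀ᵐ t ∂(volume.restrict (Set.Icc (τ i) (σ (i + 1)))), h t ≤ 0) ∧
      (τ i < σ (i + 1) →
        ¬ (∀ᵐ t ∂(volume.restrict (Set.Icc (τ i) (σ (i + 1)))), h t = 0))) :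
    ∃ μstar > (0 : ℝ), ∀ μ > μstar,
      ∃ v v' : Fin (2 ^ m - 1) → ℝ → ℝ,
        (∀ i, IsCaraSol a b (fun s x => (posW h s - μ * negW h s) * g x) (v i) (v' i) ∧
          v i a = 0 ∧ v i b = 0 ∧ ∀ t ∈ Set.Ioo a b, 0 < v i t) ∧
        (∀ i j, i ≠ j → ∃ t ∈ Set.Icc a b, v i t ≠ v j t) := by
  subst hτ0 hσlast
  have hg : SuperlinearNonlinearity g := ⟨hg_cont, hg_pos, hg_ext, hg_zero, hg_infty⟩
  have hh : AlternatingWeight m σ τ h :=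
    { toAlternatingNodes := .of_lt h0 hlast hστ hτσ
      integrableOn := hh_int
      gap_lt := fun i hi ↦ hτσ (i + 1) (by lia) hi
      nonneg_bump := fun i hi ↦ (hpos (i + 1) (by lia) hi).1
      nonpos_gap := fun i hi ↦ (hneg i hi).1
      ne_zero_bump := fun i hi ↦ (hpos (i + 1) (by lia) hi).2
      ne_zero_gap := fun i hi ↦ (hneg (i + 1) hi.le).2 (hτσ (i + 1) (by lia) hi) }
  obtain ⟨μstar, hμstar, r, hr, hsol⟩ := hh.exists_positive_solution_followsItinerary hg hab
  obtain ⟨S, hS_inj, hS⟩ := exists_injective_nonempty_subset_range m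
  refine ⟨μstar, hμstar, fun μ hμ ↦ ?_⟩
  choose v v' hv hleft hright hpos' hitin using fun j ↦ hsol μ hμ (S j) (hS j).1 (hS j).2
  refine ⟨v, v', fun j ↦ ⟨hv j, hleft j, hright j, hpos' j⟩, fun i j hij ↦ ?_⟩
  contrapose! hij with heq
  have hbump : ∀ k < m, EqOn (v i) (v j) (Icc (σ (k + 1)) (τ (k + 1))) :=
    fun k hk t ht ↦ heq t (hh.bump_subset hk ht)
  exact hS_inj <| Finset.Subset.antisymm
    ((hitin i).subset_of_eqOn (hitin j) (half_lt_self hr) (hS i).2 hbump)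
    ((hitin j).subset_of_eqOn (hitin i) (half_lt_self hr) (hS j).2 fun k hk ↦ (hbump k hk).symm)
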